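/- arXiv:2312.00722 — 2 statements merged into one kernel-verified Lean document; each statement's English description precedes it below -/
import Mathlib

section
/- Let a, b, c, s be complex numbers such that the relevant Gamma factors are defined and the integral converges. Then ∫₀^∞ (Γ(a)Γ(b)Γ(c−a)Γ(c−b)/Γ(c)) ₂F₁(a,b;c;1+x) x^{s−1} dx = cos(πs) Γ(s) Γ(s−(a+b−c)) Γ(a−s) Γ(b−s), where for t > 1 the hypergeometric function is defined by ₂F₁(a,b;c;t) := ½(₂F₁(a,b;c;t+i0) + ₂F₁(a,b;c;t−i0)). -/
/-!
Euler's integral for `₂F₁(a,b;c;z)`, with `t = u/(1+u)` and `w = 1 - z`, becomes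
`∫₀^∞ u^(b-1) (1+u)^(a-c) (1+wu)^(-a) du`. As `z → 1+x±i0` the zero of `1+wu` approaches the
contour, so the contour is first rotated to the ray `u = ±iv`, `v > 0`
(`integral_eulerLog_rotate`, Cauchy's theorem in the strip of the coordinate `log u`). On that ray
the real part of `1+wu` is at least `1`, so dominated convergence gives both boundary values as
absolutely convergent integrals (`tendsto_boundary`).

In `x`, each boundary value is a multiplicative convolution of `(1±iv)^(a-c)` with `(1∓iv)^(-a)`.
In logarithmic coordinates this is an ordinary convolution on `ℝ` of integrable functions
(`boundary_eq_convolution`), whose integral is the product of the two integrals. Rotated back to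
the positive axis, these are the Beta integrals `B(b-s, s-(a+b-c))` and `B(s, a-s)`. The rotations
leave the phase `e^(±iπs)`, and the average over the two signs is `cos(πs)`.
-/


open Complex Filter MeasureTheory
open scoped Real Topology

noncomputable section

/-- The Gauss hypergeometric function `₂F₁(a,b;c;z)`, defined for `z ∈ ℂ ∖ [1,∞)` (and
`Re c > Re b > 0`) by the Euler integral representation, which realizes its analytic
continuation to the cut plane. -/
def hyp2F1 (a b c z : ℂ) : ℂ :=
  Complex.Gamma c / (Complex.Gamma b * Complex.Gamma (c - b)) *
    ∫ t in (0 : ℝ)..1, (t : ℂ) ^ (b - 1) * ((1 : ℂ) - t) ^ (c - b - 1) * ((1 : ℂ) - z * t) ^ (-a)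

/-- The extension of `₂F₁(a,b;c;·)` to the cut `(1,∞)` by the average
`½(₂F₁(a,b;c;t+i0) + ₂F₁(a,b;c;t-i0))` of the boundary values. -/
def hyp2F1ext (a b c : ℂ) (x : ℝ) : ℂ :=
  limUnder (𝓝[>] (0 : ℝ)) fun ε =>
    (hyp2F1 a b c (x + ε * Complex.I) + hyp2F1 a b c (x - ε * Complex.I)) / 2

/-! ### The Euler integrand in logarithmic coordinates -/

/-- The Euler integrand of `₂F₁` in logarithmic coordinates. With `u = e^ζ`, `eulerLog b p q w ζ dζ`
is `u^(b-1) (1+u)^(-p) (1+wu)^(-q) du`, where `t = u/(1+u)` is the variable of Euler's integral and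
`w = 1 - z`. -/
def eulerLog (b p q w ζ : ℂ) : ℂ :=
  Complex.exp (b * ζ) * (1 + Complex.exp ζ) ^ (-p) * (1 + w * Complex.exp ζ) ^ (-q)

/-- `z` stays off the cut of the logarithm and is comparable from below with `1 + e^y`. -/
def SectorBound (κ y : ℝ) (z : ℂ) : Prop :=
  z ∈ slitPlane ∧ κ * (1 + Real.exp y) ≤ ‖z‖

lemma integrable_exp_neg_mul_abs {δ : ℝ} (hδ : 0 < δ) :
    Integrable fun y : ℝ => Real.exp (-δ * |y|) := by
  rw [← integrableOn_univ, ← Set.Iic_union_Ioi (a := (0 : ℝ)), integrableOn_union]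
  constructor
  · refine (integrableOn_exp_mul_Iic hδ 0).congr_fun (fun y hy => ?_) measurableSet_Iic
    simp [abs_of_nonpos (Set.mem_Iic.1 hy)]
  · refine (integrableOn_exp_mul_Ioi (neg_lt_zero.2 hδ) 0).congr_fun (fun y hy => ?_)
      measurableSet_Ioi
    simp [abs_of_pos (Set.mem_Ioi.1 hy)]

lemma norm_cpow_neg_le {z p : ℂ} {κ y : ℝ} (hκ : 0 < κ) (hp : 0 ≤ p.re)
    (h : κ * (1 + Real.exp y) ≤ ‖z‖) :
    ‖z ^ (-p)‖ ≤ Real.exp (π * |p.im|) * κ ^ (-p.re) * (1 + Real.exp y) ^ (-p.re) := by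
  have h1 : 0 < 1 + Real.exp y := by positivity
  have hz : 0 < ‖z‖ := lt_of_lt_of_le (by positivity) h
  refine (norm_cpow_le z (-p)).trans ?_
  rw [div_eq_mul_inv, ← Real.exp_neg, mul_comm, mul_assoc, ← Real.mul_rpow hκ.le h1.le]
  simp only [neg_re, neg_im]
  gcongr ?_ * ?_
  · apply Real.exp_le_exp.2
    have := Complex.abs_arg_le_pi z
    calc -(z.arg * -p.im) ≤ |-(z.arg * -p.im)| := le_abs_self _
      _ = |z.arg| * |p.im| := by rw [abs_neg, abs_mul, abs_neg]
      _ ≤ _ := by gcongr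
  · exact Real.rpow_le_rpow_of_nonpos (by positivity) h (by linarith)

lemma exp_mul_rpow_le {β γ y : ℝ} (hγ : 0 ≤ γ) :
    Real.exp (β * y) * (1 + Real.exp y) ^ (-γ) ≤ Real.exp (-(min β (γ - β)) * |y|) := by
  rcases le_total y 0 with hy | hy
  · calc Real.exp (β * y) * (1 + Real.exp y) ^ (-γ) ≤ Real.exp (β * y) * 1 := by
          gcongr
          exact Real.rpow_le_one_of_one_le_of_nonpos (by linarith [Real.exp_pos y]) (by linarith)
      _ ≤ _ := by
          rw [mul_one, abs_of_nonpos hy]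
          apply Real.exp_le_exp.2
          nlinarith [min_le_left β (γ - β)]
  · calc Real.exp (β * y) * (1 + Real.exp y) ^ (-γ) ≤ Real.exp (β * y) * (Real.exp y) ^ (-γ) := by
          gcongr ?_ * ?_
          exact Real.rpow_le_rpow_of_nonpos (Real.exp_pos y) (by linarith) (by linarith)
      _ ≤ _ := by
          rw [← Real.exp_mul, ← Real.exp_add, abs_of_nonneg hy]
          apply Real.exp_le_exp.2
          nlinarith [min_le_right β (γ - β)]

/-- The constant in the decay estimate `norm_eulerLog_le` for lines of height at most `|α|`. -/
def eulerConst (b p q : ℂ) (κ α : ℝ) : ℝ :=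
  Real.exp (|b.im| * |α|) * (Real.exp (π * |p.im|) * κ ^ (-p.re)) *
    (Real.exp (π * |q.im|) * κ ^ (-q.re))

/-- Exponential decay of the Euler integrand along horizontal lines, uniform in every parameter
that enters only through `κ`. -/
lemma norm_eulerLog_le {b p q w : ℂ} {κ y φ α : ℝ} (hκ : 0 < κ) (hp : 0 ≤ p.re) (hq : 0 ≤ q.re)
    (hφ : |φ| ≤ |α|)
    (h1 : κ * (1 + Real.exp y) ≤ ‖1 + Complex.exp (y + φ * I)‖)
    (h2 : κ * (1 + Real.exp y) ≤ ‖1 + w * Complex.exp (y + φ * I)‖) :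
    ‖eulerLog b p q w (y + φ * I)‖ ≤
      eulerConst b p q κ α * Real.exp (-(min b.re (p.re + q.re - b.re)) * |y|) := by
  have e1 := norm_cpow_neg_le hκ hp h1
  have e2 := norm_cpow_neg_le hκ hq h2
  have e0 : ‖Complex.exp (b * (y + φ * I))‖ ≤ Real.exp (|b.im| * |α|) * Real.exp (b.re * y) := by
    rw [Complex.norm_exp, ← Real.exp_add]
    apply Real.exp_le_exp.2
    have : -(b.im * φ) ≤ |b.im| * |α| :=
      calc -(b.im * φ) ≤ |b.im * φ| := neg_le_abs _
        _ = |b.im| * |φ| := abs_mul _ _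
        _ ≤ _ := by gcongr
    simp
    linarith
  have hpos : 0 < 1 + Real.exp y := by positivity
  have e3 := exp_mul_rpow_le (β := b.re) (γ := p.re + q.re) (y := y) (by linarith)
  have hC : 0 ≤ eulerConst b p q κ α := by unfold eulerConst; positivity
  unfold eulerLog
  rw [norm_mul, norm_mul]
  calc _ ≤ (Real.exp (|b.im| * |α|) * Real.exp (b.re * y)) *
        (Real.exp (π * |p.im|) * κ ^ (-p.re) * (1 + Real.exp y) ^ (-p.re)) *
        (Real.exp (π * |q.im|) * κ ^ (-q.re) * (1 + Real.exp y) ^ (-q.re)) := by gcongr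
    _ = eulerConst b p q κ α * (Real.exp (b.re * y) * (1 + Real.exp y) ^ (-(p.re + q.re))) := by
        rw [neg_add, Real.rpow_add hpos, eulerConst]; ring
    _ ≤ _ := by gcongr

lemma measurable_eulerLog (b p q w : ℂ) : Measurable (eulerLog b p q w) := by
  unfold eulerLog
  fun_prop

lemma integrable_eulerLog {b p q w : ℂ} {κ α : ℝ} (hκ : 0 < κ) (hp : 0 ≤ p.re) (hq : 0 ≤ q.re)
    (hb : 0 < b.re) (hb' : b.re < p.re + q.re)
    (h1 : ∀ y : ℝ, SectorBound κ y (1 + Complex.exp (y + α * I)))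
    (h2 : ∀ y : ℝ, SectorBound κ y (1 + w * Complex.exp (y + α * I))) :
    Integrable fun y : ℝ => eulerLog b p q w (y + α * I) := by
  have hδ : 0 < min b.re (p.re + q.re - b.re) := lt_min hb (by linarith)
  refine ((integrable_exp_neg_mul_abs hδ).const_mul (eulerConst b p q κ α)).mono'
    ((measurable_eulerLog b p q w).comp (by fun_prop)).aestronglyMeasurable ?_
  exact Eventually.of_forall fun y => norm_eulerLog_le hκ hp hq le_rfl (h1 y).2 (h2 y).2

/-! ### Rotation of the contour -/

/-- Rotation of the contour `u > 0` to the ray of argument `α`: Cauchy's theorem on the rectangles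
`[-T, T] × [0, α]`, whose vertical sides contribute `O(e^(-δT))`. -/
lemma integral_eulerLog_rotate {b p q w : ℂ} {κ α : ℝ} (hκ : 0 < κ) (hp : 0 ≤ p.re)
    (hq : 0 ≤ q.re) (hb : 0 < b.re) (hb' : b.re < p.re + q.re)
    (h1 : ∀ φ ∈ Set.uIcc 0 α, ∀ y : ℝ, SectorBound κ y (1 + Complex.exp (y + φ * I)))
    (h2 : ∀ φ ∈ Set.uIcc 0 α, ∀ y : ℝ, SectorBound κ y (1 + w * Complex.exp (y + φ * I))) :
    ∫ y : ℝ, eulerLog b p q w y = ∫ y : ℝ, eulerLog b p q w (y + α * I) := by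
  set δ := min b.re (p.re + q.re - b.re) with hδdef
  have hδ : 0 < δ := lt_min hb (by linarith)
  have hα : α ∈ Set.uIcc 0 α := Set.right_mem_uIcc
  have h0 : (0 : ℝ) ∈ Set.uIcc 0 α := Set.left_mem_uIcc
  have i1 := integrable_eulerLog hκ hp hq hb hb' (h1 α hα) (h2 α hα)
  have i0 : Integrable fun y : ℝ => eulerLog b p q w y := by
    simpa using integrable_eulerLog hκ hp hq hb hb' (h1 0 h0) (h2 0 h0)
  have habs : ∀ φ ∈ Set.uIcc 0 α, |φ| ≤ |α| := fun φ hφ => by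
    simpa using Set.abs_sub_left_of_mem_uIcc hφ
  have side : ∀ T : ℝ, ‖∫ y in (0 : ℝ)..α, eulerLog b p q w ((T : ℝ) + y * I)‖ ≤
      eulerConst b p q κ α * Real.exp (-δ * |T|) * |α| := fun T => by
    have := intervalIntegral.norm_integral_le_of_norm_le_const (a := 0) (b := α)
      (f := fun y : ℝ => eulerLog b p q w ((T : ℝ) + y * I))
      (C := eulerConst b p q κ α * Real.exp (-δ * |T|)) fun φ hφ => by
        have hφ' := Set.uIoc_subset_uIcc hφ
        exact norm_eulerLog_le hκ hp hq (habs φ hφ') (h1 φ hφ' T).2 (h2 φ hφ' T).2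
    simpa using this
  have rect : ∀ T : ℝ, (∫ x in (-T)..T, eulerLog b p q w x) -
      (∫ x in (-T)..T, eulerLog b p q w (x + α * I)) =
      I * (∫ y in (0 : ℝ)..α, eulerLog b p q w (((-T : ℝ) : ℂ) + y * I)) -
      I * (∫ y in (0 : ℝ)..α, eulerLog b p q w ((T : ℝ) + y * I)) := fun T => by
    have := Complex.integral_boundary_rect_eq_zero_of_differentiableOn (eulerLog b p q w)
      ((-T : ℝ) : ℂ) ((T : ℝ) + α * I) (by
        intro ζ hζ
        simp only [add_re, ofReal_re, mul_re, I_re, mul_zero, ofReal_im, I_im, mul_one, sub_self,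
          add_zero, add_im, mul_im, zero_add] at hζ
        have hζ2 := (Complex.mem_reProdIm.1 hζ).2
        have s1 := (h1 _ hζ2 ζ.re).1
        have s2 := (h2 _ hζ2 ζ.re).1
        rw [Complex.re_add_im] at s1 s2
        apply DifferentiableAt.differentiableWithinAt
        unfold eulerLog
        have d1 : DifferentiableAt ℂ (fun ζ => (1 + Complex.exp ζ) ^ (-p)) ζ :=
          DifferentiableAt.cpow (by fun_prop) (by fun_prop) s1
        have d2 : DifferentiableAt ℂ (fun ζ => (1 + w * Complex.exp ζ) ^ (-q)) ζ :=
          DifferentiableAt.cpow (by fun_prop) (by fun_prop) s2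
        fun_prop)
    simp at this ⊢
    linear_combination this
  have lim0 : Tendsto (fun T : ℝ => eulerConst b p q κ α * Real.exp (-δ * |T|) * |α|) atTop
      (𝓝 0) := by
    have : Tendsto (fun T : ℝ => Real.exp (-δ * |T|)) atTop (𝓝 0) :=
      Real.tendsto_exp_atBot.comp
        (tendsto_abs_atTop_atTop.const_mul_atTop_of_neg (neg_lt_zero.2 hδ))
    simpa using (this.const_mul (eulerConst b p q κ α)).mul_const |α|
  have limL := squeeze_zero_norm (fun T => by simpa using side (-T)) lim0
  have limR := squeeze_zero_norm side lim0
  have lim := (limL.const_mul I).sub (limR.const_mul I)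
  simp only [mul_zero, sub_self] at lim
  have lim' := (intervalIntegral_tendsto_integral i0 tendsto_neg_atTop_atBot tendsto_id).sub
    (intervalIntegral_tendsto_integral i1 tendsto_neg_atTop_atBot tendsto_id)
  have lim'' := lim'.congr fun T => rect T
  exact sub_eq_zero.1 (tendsto_nhds_unique lim'' (by simpa using lim))

/-! ### Lower bounds for the two factors on sectors -/

lemma SectorBound.mono {κ κ' y : ℝ} {z : ℂ} (h : SectorBound κ y z) (hκ : κ' ≤ κ) :
    SectorBound κ' y z :=
  ⟨h.1, le_trans (by gcongr) h.2⟩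

lemma sector_trig {σ φ : ℝ} (hσ : σ = 1 ∨ σ = -1) (hφ : φ ∈ Set.uIcc 0 (σ * (π / 2))) :
    0 ≤ Real.cos φ ∧ 0 ≤ σ * Real.sin φ := by
  have hπ := Real.pi_pos
  rcases hσ with rfl | rfl
  · rw [one_mul, Set.uIcc_of_le (by positivity)] at hφ
    exact ⟨Real.cos_nonneg_of_mem_Icc ⟨by linarith [hφ.1], hφ.2⟩,
      by simpa using Real.sin_nonneg_of_nonneg_of_le_pi hφ.1 (by linarith [hφ.2])⟩
  · rw [Set.uIcc_of_ge (by linarith)] at hφ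
    exact ⟨Real.cos_nonneg_of_mem_Icc ⟨by linarith [hφ.1], by linarith [hφ.2]⟩,
      by simpa using Real.sin_nonpos_of_nonpos_of_neg_pi_le hφ.2 (by linarith [hφ.1])⟩

lemma sector_one {φ : ℝ} (hφ : 0 ≤ Real.cos φ) (y : ℝ) :
    SectorBound (1 / 2) y (1 + Complex.exp (y + φ * I)) := by
  have hy := Real.exp_pos y
  have hre : (1 + Complex.exp (y + φ * I)).re = 1 + Real.exp y * Real.cos φ := by
    simp [Complex.exp_re]
  have him : (1 + Complex.exp (y + φ * I)).im = Real.exp y * Real.sin φ := by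
    simp [Complex.exp_im]
  have h1 : 0 ≤ Real.exp y * Real.cos φ := by positivity
  refine ⟨Or.inl (by rw [hre]; linarith), ?_⟩
  refine (pow_le_pow_iff_left₀ (by positivity) (norm_nonneg _) two_ne_zero).1 ?_
  rw [Complex.sq_norm, Complex.normSq_apply, hre, him]
  nlinarith [sq_nonneg (1 - Real.exp y), congrArg (Real.exp y ^ 2 * ·) (Real.sin_sq_add_cos_sq φ)]

/-- For `w = 1 - z` with `z = 1 + x + iσε`, the contour may be swept through the quarter plane
between the rays of argument `0` and `σπ/2`: there the imaginary part of `w e^ζ` has constant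
sign and modulus at least `min x ε * |e^ζ|`. -/
lemma sector_sweep {σ x ε : ℝ} (hσ : σ = 1 ∨ σ = -1) (hx : 0 < x) (hε : 0 < ε) :
    ∃ κ : ℝ, 0 < κ ∧ ∀ φ ∈ Set.uIcc 0 (σ * (π / 2)), ∀ y : ℝ,
      SectorBound κ y (1 + (-x - σ * ε * I) * Complex.exp (y + φ * I)) := by
  set w : ℂ := -x - σ * ε * I with hw
  set m := min x ε with hm
  have hm0 : 0 < m := lt_min hx hε
  refine ⟨(1 + ‖w‖ / m + 1 / m)⁻¹, by positivity, fun φ hφ y => ?_⟩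
  obtain ⟨hc, hs⟩ := sector_trig hσ hφ
  have hσ2 : σ * σ = 1 := by rcases hσ with rfl | rfl <;> norm_num
  have hy := Real.exp_pos y
  set N := ‖1 + w * Complex.exp (y + φ * I)‖ with hN
  have him : -(σ * (1 + w * Complex.exp (y + φ * I)).im) =
      Real.exp y * (x * (σ * Real.sin φ) + ε * Real.cos φ) := by
    simp [hw, Complex.exp_im, Complex.exp_re]
    linear_combination (Real.exp y * ε * Real.cos φ) * hσ2
  have hsum : 1 ≤ σ * Real.sin φ + Real.cos φ := by
    nlinarith [Real.sin_sq_add_cos_sq φ, mul_nonneg hs hc]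
  have hlow : Real.exp y * m ≤ Real.exp y * (x * (σ * Real.sin φ) + ε * Real.cos φ) := by
    gcongr
    nlinarith [mul_le_mul_of_nonneg_right (min_le_left x ε) hs,
      mul_le_mul_of_nonneg_right (min_le_right x ε) hc]
  have hpos : 0 < Real.exp y * m := by positivity
  have himN : Real.exp y * m ≤ N := by
    rw [← him] at hlow
    refine hlow.trans ((le_abs_self _).trans ?_)
    have hσ1 : |σ| = 1 := by rcases hσ with rfl | rfl <;> norm_num
    rw [abs_neg, abs_mul, hσ1, one_mul]
    exact Complex.abs_im_le_norm _
  refine ⟨Or.inr fun h => ?_, ?_⟩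
  · rw [← him, h] at hlow
    simp at hlow
    linarith
  · have h1 : 1 ≤ N + ‖w‖ * Real.exp y := by
      calc (1 : ℝ) = ‖(1 + w * Complex.exp (y + φ * I)) - w * Complex.exp (y + φ * I)‖ := by simp
        _ ≤ N + ‖w * Complex.exp (y + φ * I)‖ := norm_sub_le _ _
        _ = _ := by rw [norm_mul, Complex.norm_exp]; simp
    rw [inv_mul_le_iff₀ (by positivity)]
    have h2 : Real.exp y ≤ N / m := by rwa [le_div_iff₀ hm0]
    calc 1 + Real.exp y ≤ N + ‖w‖ * (N / m) + N / m := by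
          have := mul_le_mul_of_nonneg_left h2 (norm_nonneg w)
          linarith
      _ = _ := by ring

lemma exp_quarter {σ : ℝ} (hσ : σ = 1 ∨ σ = -1) (y : ℝ) :
    Complex.exp (y + ((σ * (π / 2) : ℝ) : ℂ) * I) = Real.exp y * (σ * I) := by
  rw [Complex.exp_add, Complex.ofReal_exp]
  rcases hσ with rfl | rfl
  · simp [Complex.exp_pi_div_two_mul_I]
  · simp [Complex.exp_neg, Complex.exp_pi_div_two_mul_I]

/-- On the rotated ray the lower bound is uniform as `ε → 0`. -/
lemma sector_limit {σ x ε : ℝ} (hσ : σ = 1 ∨ σ = -1) (hx : 0 < x) (hε : 0 ≤ ε) (y : ℝ) :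
    SectorBound (min 1 x / 2) y
      (1 + (-x - σ * ε * I) * Complex.exp (y + ((σ * (π / 2) : ℝ) : ℂ) * I)) := by
  have hy := Real.exp_pos y
  rw [exp_quarter hσ]
  have hσ2 : σ * σ = 1 := by rcases hσ with rfl | rfl <;> norm_num
  set z : ℂ := 1 + (-x - σ * ε * I) * (Real.exp y * (σ * I)) with hz
  have hre : z.re = 1 + ε * Real.exp y := by
    simp only [hz, add_re, one_re, mul_re, sub_re, neg_re, ofReal_re, I_re, mul_zero, ofReal_im,
      I_im, sub_im, neg_im, mul_im, sub_zero, zero_mul, add_zero, mul_one]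
    linear_combination (Real.exp y * ε) * hσ2
  have him : z.im = -(x * Real.exp y * σ) := by
    simp only [hz, add_im, one_im, mul_re, sub_re, neg_re, ofReal_re, I_re, mul_zero, ofReal_im,
      I_im, sub_im, neg_im, mul_im, sub_zero, zero_mul, add_zero, mul_one]
    ring
  have hp : 0 ≤ ε * Real.exp y := by positivity
  refine ⟨Or.inl (by rw [hre]; linarith), ?_⟩
  have n1 : 1 ≤ ‖z‖ := by
    have := (le_abs_self _).trans (Complex.abs_re_le_norm z)
    linarith
  have n2 : x * Real.exp y ≤ ‖z‖ := by
    refine le_trans (le_of_eq ?_) (Complex.abs_im_le_norm z)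
    have hσ1 : |σ| = 1 := by rcases hσ with rfl | rfl <;> norm_num
    rw [him, abs_neg, abs_mul, hσ1, mul_one, abs_of_pos (by positivity)]
  nlinarith [min_le_left 1 x, mul_le_mul_of_nonneg_right (min_le_right 1 x) hy.le]

/-! ### Substitution in Euler's integral, and Beta integrals -/

lemma div_ofReal_cpow {r : ℝ} (hr : 0 < r) {z : ℂ} (hz : z ≠ 0) (s : ℂ) :
    (z / r) ^ s = z ^ s * Complex.exp (-(Real.log r) * s) := by
  have hr' : (r : ℂ) ≠ 0 := ofReal_ne_zero.2 hr.ne'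
  have hrw : z / r = ((r⁻¹ : ℝ) : ℂ) * z := by push_cast; field_simp
  rw [Complex.cpow_def_of_ne_zero (div_ne_zero hz hr'), hrw,
    Complex.log_ofReal_mul (inv_pos.2 hr) hz, Complex.cpow_def_of_ne_zero hz, ← Complex.exp_add,
    Real.log_inv]
  congr 1
  push_cast
  ring

/-- Euler's integral after the substitution `t = e^y / (1 + e^y)`. -/
lemma euler_substitution (a b c z : ℂ) (hz : ∀ y : ℝ, 1 + (1 - z) * Complex.exp y ≠ 0) :
    ∫ t in (0 : ℝ)..1, (t : ℂ) ^ (b - 1) * ((1 : ℂ) - t) ^ (c - b - 1) * ((1 : ℂ) - z * t) ^ (-a)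
      = ∫ y : ℝ, eulerLog b (c - a) a (1 - z) y := by
  rw [intervalIntegral.integral_of_le zero_le_one, integral_Ioc_eq_integral_Ioo,
    ← Real.range_sigmoid, ← Set.image_univ,
    integral_image_eq_integral_abs_deriv_smul MeasurableSet.univ
      (fun x _ => (Real.hasDerivAt_sigmoid x).hasDerivWithinAt) Real.sigmoid_injective.injOn,
    setIntegral_univ]
  congr 1
  ext y
  have hy := Real.exp_pos y
  have hr : 0 < 1 + Real.exp y := by positivity
  have hrC : (1 + Complex.exp y : ℂ) ≠ 0 := by
    rw [← Complex.ofReal_exp]; exact_mod_cast hr.ne'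
  have hs : Real.sigmoid y = Real.exp y / (1 + Real.exp y) := by
    rw [Real.sigmoid_def, Real.exp_neg]; field_simp; ring
  have hs' : 1 - Real.sigmoid y = 1 / (1 + Real.exp y) := by rw [hs]; field_simp; ring
  have hp := Real.sigmoid_pos y
  have hp' : 0 < 1 - Real.sigmoid y := sub_pos.2 (Real.sigmoid_lt_one y)
  rw [abs_of_pos (mul_pos hp hp')]
  have l1 : Real.log (Real.sigmoid y) = y - Real.log (1 + Real.exp y) := by
    rw [hs, Real.log_div hy.ne' hr.ne', Real.log_exp]
  have l2 : Real.log (1 - Real.sigmoid y) = - Real.log (1 + Real.exp y) := by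
    rw [hs', one_div, Real.log_inv]
  have e1 : (Real.sigmoid y : ℂ) ^ (b - 1) * Real.sigmoid y =
      Complex.exp ((y - Real.log (1 + Real.exp y)) * b) := by
    have hne : (Real.sigmoid y : ℂ) ≠ 0 := ofReal_ne_zero.2 hp.ne'
    rw [Complex.cpow_sub _ _ hne, Complex.cpow_one, div_mul_cancel₀ _ hne, Complex.cpow_def_of_ne_zero hne,
      ← Complex.ofReal_log hp.le, l1]
    push_cast; rfl
  have e2 : (1 - Real.sigmoid y : ℂ) ^ (c - b - 1) * (1 - Real.sigmoid y) =
      Complex.exp ((-Real.log (1 + Real.exp y)) * (c - b)) := by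
    have hne : (1 - Real.sigmoid y : ℂ) ≠ 0 := by exact_mod_cast hp'.ne'
    have hlog : Complex.log (1 - Real.sigmoid y : ℂ) = (Real.log (1 - Real.sigmoid y) : ℝ) := by
      rw [Complex.ofReal_log hp'.le]; push_cast; rfl
    rw [Complex.cpow_sub _ _ hne, Complex.cpow_one, div_mul_cancel₀ _ hne, Complex.cpow_def_of_ne_zero hne, hlog, l2]
    push_cast; rfl
  have e3 : (1 - z * Real.sigmoid y : ℂ) ^ (-a) =
      (1 + (1 - z) * Complex.exp y) ^ (-a) *
        Complex.exp (-(Real.log (1 + Real.exp y)) * (-a)) := by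
    rw [← div_ofReal_cpow hr (hz y), hs]
    congr 1
    push_cast
    field_simp
    ring
  have e4 : (1 + Complex.exp y) ^ (-(c - a)) =
      Complex.exp ((Real.log (1 + Real.exp y)) * (-(c - a))) := by
    rw [Complex.cpow_def_of_ne_zero hrC, Complex.ofReal_log hr.le]
    push_cast; rfl
  have key : (Real.sigmoid y * (1 - Real.sigmoid y)) • ((Real.sigmoid y : ℂ) ^ (b - 1) *
      ((1 : ℂ) - Real.sigmoid y) ^ (c - b - 1) * ((1 : ℂ) - z * Real.sigmoid y) ^ (-a)) =
      ((Real.sigmoid y : ℂ) ^ (b - 1) * Real.sigmoid y) *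
      ((1 - Real.sigmoid y : ℂ) ^ (c - b - 1) * (1 - Real.sigmoid y)) *
      (1 - z * Real.sigmoid y : ℂ) ^ (-a) := by
    rw [Complex.real_smul]; push_cast; ring
  rw [key, e1, e2, e3, eulerLog, e4]
  have : Complex.exp ((y - Real.log (1 + Real.exp y)) * b) *
      Complex.exp ((-Real.log (1 + Real.exp y)) * (c - b)) *
      Complex.exp (-(Real.log (1 + Real.exp y)) * (-a)) =
      Complex.exp (b * y) * Complex.exp ((Real.log (1 + Real.exp y)) * (-(c - a))) := by
    rw [← Complex.exp_add, ← Complex.exp_add, ← Complex.exp_add]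
    congr 1
    ring
  linear_combination ((1 + (1 - z) * Complex.exp y) ^ (-a)) * this

/-- The Mellin transform of `(1+u)^(-a)` along either ray of argument `±π/2`, a Beta integral. -/
lemma integral_eulerLog_beta {s a : ℂ} (hs : 0 < s.re) (hsa : s.re < a.re) {σ : ℝ}
    (hσ : σ = 1 ∨ σ = -1) :
    Complex.Gamma a * ∫ y : ℝ, eulerLog s a 0 1 (y + ((σ * (π / 2) : ℝ) : ℂ) * I) =
      Complex.Gamma s * Complex.Gamma (a - s) := by
  have hsec : ∀ φ ∈ Set.uIcc 0 (σ * (π / 2)), ∀ y : ℝ,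
      SectorBound (1 / 2) y (1 + Complex.exp (y + φ * I)) := fun φ hφ y =>
    sector_one (sector_trig hσ hφ).1 y
  rw [← integral_eulerLog_rotate (κ := 1 / 2) (by norm_num) (by linarith) (by simp) hs
    (by simpa using hsa) hsec (by simpa using hsec),
    Complex.Gamma_mul_Gamma_eq_betaIntegral hs (by simpa using hsa), add_sub_cancel]
  congr 1
  have := euler_substitution 0 s a 0 (fun y => by
    rw [← Complex.ofReal_exp]
    have := Real.exp_pos y
    simp only [sub_zero, one_mul]
    exact_mod_cast (by positivity : (1 + Real.exp y) ≠ 0))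
  simp only [sub_zero] at this
  rw [← this, Complex.betaIntegral]
  simp

/-! ### Boundary values on the cut -/

/-- The value `₂F₁(a,b;c;1+x±i0)` without its Gamma factors, where `σ = ±1` is the sign of the
approach: Euler's integral along the rotated ray, on which it converges for every `x > 0`. -/
def boundaryIntegral (a b c : ℂ) (σ x : ℝ) : ℂ :=
  ∫ y : ℝ, eulerLog b (c - a) a (-x) (y + ((σ * (π / 2) : ℝ) : ℂ) * I)

lemma tendsto_boundary {a b c : ℂ} {σ x : ℝ} (hσ : σ = 1 ∨ σ = -1) (hx : 0 < x)
    (ha : 0 ≤ a.re) (hca : 0 ≤ (c - a).re) (hb : 0 < b.re) (hbc : b.re < c.re) :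
    Tendsto (fun ε : ℝ => hyp2F1 a b c (((1 + x : ℝ) : ℂ) + σ * ε * I)) (𝓝[>] 0)
      (𝓝 (Complex.Gamma c / (Complex.Gamma b * Complex.Gamma (c - b)) *
        boundaryIntegral a b c σ x)) := by
  have hb' : b.re < (c - a).re + a.re := by simpa using hbc
  have hδ : 0 < min b.re ((c - a).re + a.re - b.re) := lt_min hb (by linarith)
  have hα : σ * (π / 2) ∈ Set.uIcc 0 (σ * (π / 2)) := Set.right_mem_uIcc
  have hα1 := fun y => sector_one (sector_trig hσ hα).1 y
  unfold hyp2F1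
  refine Tendsto.const_mul _ ?_
  have hev : ∀ᶠ ε : ℝ in 𝓝[>] 0, 0 < ε := eventually_mem_nhdsWithin
  have heq : ∀ᶠ ε : ℝ in 𝓝[>] 0,
      ∫ y : ℝ, eulerLog b (c - a) a (-x - σ * ε * I) (y + ((σ * (π / 2) : ℝ) : ℂ) * I) =
      ∫ t in (0 : ℝ)..1, (t : ℂ) ^ (b - 1) * ((1 : ℂ) - t) ^ (c - b - 1) *
        ((1 : ℂ) - (((1 + x : ℝ) : ℂ) + σ * ε * I) * t) ^ (-a) := by
    filter_upwards [hev] with ε hε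
    obtain ⟨κ, hκ, hsec⟩ := sector_sweep hσ hx hε
    have hw : 1 - (((1 + x : ℝ) : ℂ) + σ * ε * I) = -x - σ * ε * I := by push_cast; ring
    rw [euler_substitution, hw]
    · symm
      exact integral_eulerLog_rotate (κ := min (1 / 2) κ) (by positivity) hca ha hb hb'
        (fun φ hφ y => (sector_one (sector_trig hσ hφ).1 y).mono (min_le_left _ _))
        (fun φ hφ y => (hsec φ hφ y).mono (min_le_right _ _))
    · intro y
      rw [hw]
      have := (hsec 0 Set.left_mem_uIcc y).1
      exact slitPlane_ne_zero (by simpa using this)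
  refine Tendsto.congr' heq ?_
  set κ := min (1 / 2) (min 1 x / 2) with hκdef
  have hκ : 0 < κ := by positivity
  refine tendsto_integral_filter_of_dominated_convergence
    (fun y => eulerConst b (c - a) a κ (σ * (π / 2)) *
      Real.exp (-(min b.re ((c - a).re + a.re - b.re)) * |y|)) ?_ ?_
    ((integrable_exp_neg_mul_abs hδ).const_mul _) ?_
  · exact Eventually.of_forall fun ε =>
      ((measurable_eulerLog _ _ _ _).comp (by fun_prop)).aestronglyMeasurable
  · filter_upwards [hev] with ε hε
    exact Eventually.of_forall fun y => norm_eulerLog_le hκ hca ha le_rfl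
      ((hα1 y).mono (min_le_left _ _)).2
      ((sector_limit hσ hx hε.le y).mono (min_le_right _ _)).2
  · refine Eventually.of_forall fun y => ?_
    have h0 := (sector_limit hσ hx le_rfl y).1
    refine Tendsto.mono_left ?_ nhdsWithin_le_nhds
    have hcont : ContinuousAt (fun ε : ℝ => eulerLog b (c - a) a (-x - σ * ε * I)
        (y + ((σ * (π / 2) : ℝ) : ℂ) * I)) 0 := by
      unfold eulerLog
      refine ContinuousAt.mul continuousAt_const (ContinuousAt.cpow ?_ continuousAt_const h0)
      fun_prop
    simpa using hcont.tendsto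

lemma hyp2F1ext_eq {a b c : ℂ} {x : ℝ} (hx : 0 < x)
    (ha : 0 ≤ a.re) (hca : 0 ≤ (c - a).re) (hb : 0 < b.re) (hbc : b.re < c.re) :
    hyp2F1ext a b c (1 + x) = Complex.Gamma c / (Complex.Gamma b * Complex.Gamma (c - b)) *
      ((boundaryIntegral a b c 1 x + boundaryIntegral a b c (-1) x) / 2) := by
  have h1 := tendsto_boundary (σ := 1) (Or.inl rfl) hx ha hca hb hbc
  have h2 := tendsto_boundary (σ := -1) (Or.inr rfl) hx ha hca hb hbc
  have h := (h1.add h2).div_const 2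
  rw [← mul_add, mul_div_assoc] at h
  refine (h.congr fun ε => ?_).limUnder_eq
  congr 3
  · push_cast; ring
  · push_cast; ring

/-! ### The Mellin transform of the boundary values -/

/-- In logarithmic coordinates the rotated Euler integral is a multiplicative convolution, because
`-e^ξ e^(y + iσπ/2) = e^(ξ + y - iσπ/2)`; the Mellin weight `e^(sξ)` is split accordingly. -/
lemma boundary_eq_convolution {a b c s : ℂ} {σ : ℝ} (hσ : σ = 1 ∨ σ = -1) (ξ : ℝ) :
    Complex.exp (s * ξ) * boundaryIntegral a b c σ (Real.exp ξ) =
      Complex.exp (σ * (π * s) * I) *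
      convolution
        (fun t : ℝ => eulerLog (b - s) (c - a) 0 1 (((-t : ℝ) : ℂ) + ((σ * (π / 2) : ℝ) : ℂ) * I))
        (fun y : ℝ => eulerLog s a 0 1 (y + ((-σ * (π / 2) : ℝ) : ℂ) * I))
        (ContinuousLinearMap.mul ℝ ℂ) volume ξ := by
  rw [convolution, ← integral_neg_eq_self, boundaryIntegral, ← integral_const_mul,
    ← integral_const_mul]
  congr 1
  ext y
  simp only [ContinuousLinearMap.mul_apply', neg_neg, sub_neg_eq_add]
  unfold eulerLog
  have hexp : 1 * Complex.exp (((ξ + y : ℝ) : ℂ) + ((-σ * (π / 2) : ℝ) : ℂ) * I) =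
      -((Real.exp ξ : ℝ) : ℂ) * Complex.exp (y + ((σ * (π / 2) : ℝ) : ℂ) * I) := by
    have hσ' : -σ = 1 ∨ -σ = -1 := by rcases hσ with rfl | rfl <;> simp
    rw [exp_quarter hσ', exp_quarter hσ, Real.exp_add]
    push_cast
    ring
  rw [← hexp]
  simp only [neg_zero, Complex.cpow_zero, mul_one, one_mul]
  have : Complex.exp (s * ξ) * Complex.exp (b * (y + ((σ * (π / 2) : ℝ) : ℂ) * I)) =
      Complex.exp (σ * (π * s) * I) *
        Complex.exp ((b - s) * (y + ((σ * (π / 2) : ℝ) : ℂ) * I)) *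
        Complex.exp (s * (((ξ + y : ℝ) : ℂ) + ((-σ * (π / 2) : ℝ) : ℂ) * I)) := by
    rw [← Complex.exp_add, ← Complex.exp_add, ← Complex.exp_add]
    congr 1
    push_cast
    ring
  linear_combination ((1 + Complex.exp (y + ((σ * (π / 2) : ℝ) : ℂ) * I)) ^ (-(c - a)) *
    (1 + Complex.exp (((ξ + y : ℝ) : ℂ) + ((-σ * (π / 2) : ℝ) : ℂ) * I)) ^ (-a)) * this

lemma mellin_boundary {a b c s : ℂ} {σ : ℝ} (hσ : σ = 1 ∨ σ = -1)
    (hs0 : 0 < s.re) (hsabc : (a + b - c).re < s.re) (hsa : s.re < a.re) (hsb : s.re < b.re) :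
    Integrable (fun ξ : ℝ => Complex.exp (s * ξ) * boundaryIntegral a b c σ (Real.exp ξ)) ∧
    Complex.Gamma a * Complex.Gamma (c - a) *
      ∫ ξ : ℝ, Complex.exp (s * ξ) * boundaryIntegral a b c σ (Real.exp ξ) =
      Complex.exp (σ * (π * s) * I) * (Complex.Gamma s * Complex.Gamma (s - (a + b - c)) *
          Complex.Gamma (a - s) * Complex.Gamma (b - s)) := by
  have hσ' : -σ = 1 ∨ -σ = -1 := by rcases hσ with rfl | rfl <;> simp
  simp only [add_re, sub_re] at hsabc
  have hbs : 0 < (b - s).re := by simpa using hsb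
  have hbs' : (b - s).re < (c - a).re := by simp only [sub_re]; linarith
  have m1 := integral_eulerLog_beta hbs hbs' hσ
  have m2 := integral_eulerLog_beta hs0 hsa hσ'
  have int : ∀ {u v : ℂ} {τ : ℝ}, 0 < u.re → u.re < v.re → (τ = 1 ∨ τ = -1) →
      Integrable fun y : ℝ => eulerLog u v 0 1 (y + ((τ * (π / 2) : ℝ) : ℂ) * I) := by
    intro u v τ hu huv hτ
    have hsec := fun y => sector_one (sector_trig hτ Set.right_mem_uIcc).1 y
    exact integrable_eulerLog (κ := 1 / 2) (by norm_num) (by linarith) (by simp) hu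
      (by simpa using huv) hsec (by simpa using hsec)
  have i1 := (int hbs hbs' hσ).comp_neg
  have i2 := int hs0 hsa hσ'
  simp only [boundary_eq_convolution hσ]
  refine ⟨(i1.integrable_convolution (ContinuousLinearMap.mul ℝ ℂ) i2).const_mul _, ?_⟩
  rw [integral_const_mul, integral_convolution (ContinuousLinearMap.mul ℝ ℂ) i1 i2,
    ContinuousLinearMap.mul_apply',
    integral_neg_eq_self (fun y : ℝ =>
      eulerLog (b - s) (c - a) 0 1 (y + ((σ * (π / 2) : ℝ) : ℂ) * I))]
  rw [show c - a - (b - s) = s - (a + b - c) by ring] at m1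
  linear_combination (Complex.exp (σ * (π * s) * I) * Complex.Gamma a *
    ∫ y : ℝ, eulerLog s a 0 1 (y + ((-σ * (π / 2) : ℝ) : ℂ) * I)) * m1 +
    (Complex.exp (σ * (π * s) * I) * Complex.Gamma (b - s) * Complex.Gamma (s - (a + b - c))) * m2

lemma integral_Ioi_exp_substitution (f : ℝ → ℂ) (s : ℂ) :
    ∫ x in Set.Ioi (0 : ℝ), f x * (x : ℂ) ^ (s - 1) =
      ∫ ξ : ℝ, Complex.exp (s * ξ) * f (Real.exp ξ) := by
  rw [← Real.range_exp, ← Set.image_univ,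
    integral_image_eq_integral_abs_deriv_smul MeasurableSet.univ
      (fun x _ => (Real.hasDerivAt_exp x).hasDerivWithinAt) Real.exp_injective.injOn,
    setIntegral_univ]
  congr 1
  ext ξ
  rw [abs_of_pos (Real.exp_pos ξ), Complex.real_smul]
  have hne : ((Real.exp ξ : ℝ) : ℂ) ≠ 0 := ofReal_ne_zero.2 (Real.exp_pos ξ).ne'
  have : ((Real.exp ξ : ℝ) : ℂ) ^ (s - 1) * Real.exp ξ = Complex.exp (s * ξ) := by
    rw [Complex.cpow_sub _ _ hne, Complex.cpow_one, div_mul_cancel₀ _ hne,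
      Complex.cpow_def_of_ne_zero hne, ← Complex.ofReal_log (Real.exp_pos ξ).le, Real.log_exp,
      mul_comm]
  linear_combination f (Real.exp ξ) * this

/-- **Equation (2.6)**: the Mellin transform of the hypergeometric function on the cut. -/
theorem mellin_hyp2F1_cut (a b c s : ℂ)
    (hb : 0 < b.re) (hbc : b.re < c.re)
    (hs0 : 0 < s.re) (hsabc : (a + b - c).re < s.re)
    (hsa : s.re < a.re) (hsb : s.re < b.re) :
    ∫ x in Set.Ioi (0 : ℝ),
        Complex.Gamma a * Complex.Gamma b * Complex.Gamma (c - a) * Complex.Gamma (c - b) /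
          Complex.Gamma c * hyp2F1ext a b c (1 + x) * (x : ℂ) ^ (s - 1)
      = Complex.cos (Real.pi * s) * Complex.Gamma s * Complex.Gamma (s - (a + b - c)) *
          Complex.Gamma (a - s) * Complex.Gamma (b - s) := by
  have hca : 0 < (c - a).re := by
    simp only [add_re, sub_re] at hsabc ⊢
    linarith
  have ha : 0 < a.re := hs0.trans hsa
  have hcb : 0 < (c - b).re := by simpa using hbc
  have gb := Complex.Gamma_ne_zero_of_re_pos hb
  have gc := Complex.Gamma_ne_zero_of_re_pos (hb.trans hbc)
  have gcb := Complex.Gamma_ne_zero_of_re_pos hcb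
  obtain ⟨i1, e1⟩ := mellin_boundary (σ := 1) (Or.inl rfl) hs0 hsabc hsa hsb
  obtain ⟨i2, e2⟩ := mellin_boundary (σ := -1) (Or.inr rfl) hs0 hsabc hsa hsb
  rw [integral_Ioi_exp_substitution (fun x => Complex.Gamma a * Complex.Gamma b *
    Complex.Gamma (c - a) * Complex.Gamma (c - b) / Complex.Gamma c * hyp2F1ext a b c (1 + x))]
  have hint : ∀ ξ : ℝ, Complex.exp (s * ξ) * (Complex.Gamma a * Complex.Gamma b *
      Complex.Gamma (c - a) * Complex.Gamma (c - b) / Complex.Gamma c *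
        hyp2F1ext a b c (1 + Real.exp ξ)) =
      (Complex.Gamma a * Complex.Gamma (c - a) / 2) *
        (Complex.exp (s * ξ) * boundaryIntegral a b c 1 (Real.exp ξ) +
          Complex.exp (s * ξ) * boundaryIntegral a b c (-1) (Real.exp ξ)) := fun ξ => by
    rw [hyp2F1ext_eq (Real.exp_pos ξ) ha.le hca.le hb hbc]
    field_simp
  simp only [hint]
  rw [integral_const_mul, integral_add i1 i2]
  have hcos : Complex.cos (π * s) =
      (Complex.exp (((1 : ℝ) : ℂ) * (π * s) * I) + Complex.exp (((-1 : ℝ) : ℂ) * (π * s) * I)) / 2 := by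
    rw [Complex.cos]
    push_cast
    simp
  rw [hcos]
  linear_combination (e1 + e2) / 2

end
end

section
/- Let k₁, k₂, m₁, m₂ ∈ ℤ_{≥0} with m₁ ≤ k₁, m₂ ≤ k₂ and m₁ + m₂ < k₁ + k₂, let k = 2(k₁+k₂), d = (k₁+k₂) − m₁ − m₂ − 1, r₁ = 2m₁, r₂ = 2m₂, and suppose r₂ ≠ 0. Then for every integer n > 0, (−1)^{k₂} ((4πn)^{k−1}/(k−2)!) (σ_{r₁}(n)/n^{m₁+1/2}) ∫₀^∞ W_{k₁,m₁}(4πny) (θ_{k₂}(m₂+1/2) y^{m₂+1/2} + θ_{k₂}(1/2−m₂) y^{1/2−m₂}) e^{−2πny} y^{k₁+k₂−2} dy = (−1)^{k₂} (2^k π^{k/2−1} cos(π m₂)/(k−2)!) n^d σ_{r₁}(n) [ n^{r₂} ζ(r₂) Γ(r₂) Γ(d+1) Γ(k/2 + m₁ − m₂) + ζ(−r₂) Γ(−r₂) Γ(k/2 − m₁ + m₂) Γ(r₁ + r₂ + d + 1) ], where θ_κ(s) = π^{−s} Γ(s+κ) ζ(2s). -/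
/-!
The integral is a sum of two Mellin transforms `F(s) = ∫₀^∞ t^{s-1} e^{-t/2} W_{κ,m}(t) dt`, taken at
`s = k₁ + k₂ ± m₂ - 1/2`, and everything rests on the closed form (`IsWhittakerW.mellin_eq`)
`F(s) = Γ(s + 1/2 + m) Γ(s + 1/2 - m) / Γ(s + 1 - κ)`.

Since `W` is only known through its differential equation and its behaviour at infinity, the closed
form is proved without any integral representation of `W`.
* Near `0`, the energy `t^{2m} ((tW' - W/2)² + (m + 1/2)² W²)` is nondecreasing
  (`IsWhittakerW.energy_bound`), so `W` and `tW'` are `O(t^{-m})`. This makes `F(s)` converge for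
  `s > m` and kills the boundary terms of integrations by parts.
* Integrating the differential equation by parts gives (`IsWhittakerW.mellin_add_one`)
  `(s + 1 - κ) F(s+1) = (s + 1/2 + m)(s + 1/2 - m) F(s)`, which the quotient of Gamma functions
  satisfies too. The ratio of both sides of the closed form is thus constant along `s + ℕ`.
* As `N → ∞`, the integral defining `F(s + N)` concentrates at infinity, where
  `W(t) ∼ e^{-t/2} t^κ`, so `F(s + N) ∼ Γ(s + κ + N)` (`IsWhittakerW.tendsto_mellin`). By Euler's limit
  formula the Gamma quotient has the same asymptotics. The constant ratio is therefore `1`.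

In the application, `Γ(s + 1 - κ) = Γ(1/2 ± m₂ + k₂)` cancels the Gamma factor of
`θ_{k₂}(1/2 ± m₂)`, leaving `ζ(1 ± 2m₂)`. The functional equation turns `ζ(1 - 2m₂)` into
`ζ(r₂)Γ(r₂)` and `ζ(1 + 2m₂)` into `lim_{s → -r₂} ζ(s)Γ(s)`
(`zeta_one_sub_even`, `zeta_one_add_even`). What remains is a comparison of powers of `2`, `π`
and `n` (`power_identity`).
-/

open Complex Filter MeasureTheory
open scoped Real Topology

noncomputable section

/-- `W : ℝ → ℝ` is the Whittaker function `W_{κ,μ}` on `(0,∞)`: it is the solution of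
Whittaker's differential equation
`W'' + (-1/4 + κ/y + (1/4 - μ²)/y²) W = 0`
which is recessive at infinity, normalized by `W(y) ∼ e^{-y/2} y^κ` as `y → ∞`. -/
def IsWhittakerW (κ μ : ℝ) (W : ℝ → ℝ) : Prop :=
  (∀ y : ℝ, 0 < y → ContDiffAt ℝ 2 W y) ∧
  (∀ y : ℝ, 0 < y →
    deriv (deriv W) y + (-(1 / 4) + κ / y + (1 / 4 - μ ^ 2) / y ^ 2) * W y = 0) ∧
  Tendsto (fun y : ℝ => W y / (Real.exp (-y / 2) * y ^ κ)) atTop (𝓝 1)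

/-- The extension of the Whittaker `W`-function to `ℝ ∖ {0}`:
`W_{κ,μ}(y) := (Γ(1/2+μ-sgn(y)κ)/Γ(1/2+μ-κ)) W_{sgn(y)κ,μ}(|y|)`.
Here `W : ℝ → ℝ → ℝ → ℝ` is the family `(κ, μ, y) ↦ W_{κ,μ}(y)`. -/
def Wext (W : ℝ → ℝ → ℝ → ℝ) (κ μ y : ℝ) : ℝ :=
  Real.Gamma (1 / 2 + μ - Real.sign y * κ) / Real.Gamma (1 / 2 + μ - κ) *
    W (Real.sign y * κ) μ |y|

/-- The divisor function `σ_r(n) = Σ_{d ∣ |n|, d > 0} d^r` for a (nonzero) integer `n`. -/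
def sigmaZ (r : ℕ) (n : ℤ) : ℕ := ∑ d ∈ n.natAbs.divisors, d ^ r

/-- `θ_κ(s) = π^{-s} Γ(s+κ) ζ(2s)`. -/
def theta (κ : ℕ) (s : ℝ) : ℂ :=
  (Real.pi : ℂ) ^ (-(s : ℂ)) * Complex.Gamma ((s : ℂ) + κ) * riemannZeta (2 * s)

/-! ### Regularity, and growth at the origin -/

lemma IsWhittakerW.hasDerivAt {κ μ : ℝ} {W : ℝ → ℝ} (hW : IsWhittakerW κ μ W) {y : ℝ}
    (hy : 0 < y) : HasDerivAt W (deriv W y) y :=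
  ((hW.1 y hy).differentiableAt (by norm_num)).hasDerivAt

lemma IsWhittakerW.hasDerivAt_deriv {κ μ : ℝ} {W : ℝ → ℝ} (hW : IsWhittakerW κ μ W) {y : ℝ}
    (hy : 0 < y) :
    HasDerivAt (deriv W) ((1 / 4 - κ / y - (1 / 4 - μ ^ 2) / y ^ 2) * W y) y := by
  have h1 : ContDiffOn ℝ 2 W (Set.Ioi 0) := fun x hx => (hW.1 x hx).contDiffWithinAt
  have h2 : DifferentiableAt ℝ (deriv W) y := by
    have h3 : ContDiffOn ℝ 1 (deriv W) (Set.Ioi 0) :=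
      h1.deriv_of_isOpen isOpen_Ioi (by norm_num)
    exact (h3.differentiableOn (by norm_num)).differentiableAt (Ioi_mem_nhds hy)
  have h4 := hW.2.1 y hy
  have h5 : deriv (deriv W) y = (1 / 4 - κ / y - (1 / 4 - μ ^ 2) / y ^ 2) * W y := by
    linear_combination h4
  exact h5 ▸ h2.hasDerivAt

lemma IsWhittakerW.continuousOn {κ μ : ℝ} {W : ℝ → ℝ} (hW : IsWhittakerW κ μ W) :
    ContinuousOn W (Set.Ioi 0) :=
  fun _ hx => (hW.hasDerivAt hx).continuousAt.continuousWithinAt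

/-- An energy estimate at the regular singular point `0`. With `c = m + 1/2`, `P = W` and
`Q = tW' - W/2`, the equation becomes `tP' = Q + P/2`, `tQ' = Q/2 + (m² - κt + t²/4) P`, so that
`t^{2m} (Q² + c² P²)` is nondecreasing as soon as `|-κt + t²/4| ≤ 1/4`. Here `c` exceeds the
exponent `m` just enough to absorb that perturbation, including when `m = 0`, where
`W` may have a logarithmic term. -/
lemma IsWhittakerW.energy_bound {κ : ℝ} {m : ℕ} {W : ℝ → ℝ} (hW : IsWhittakerW κ m W) :
    ∃ C : ℝ, ∀ᶠ t in 𝓝[>] (0 : ℝ),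
      t ^ (2 * m) * ((t * deriv W t - W t / 2) ^ 2 + ((m : ℝ) + 1 / 2) ^ 2 * W t ^ 2) ≤ C := by
  have hδ : ∀ᶠ t in 𝓝[>] (0 : ℝ), |-(κ * t) + t ^ 2 / 4| < 1 / 4 := by
    have : Tendsto (fun t : ℝ => |-(κ * t) + t ^ 2 / 4|) (𝓝 0) (𝓝 |-(κ * 0) + 0 ^ 2 / 4|) :=
      Continuous.tendsto (by fun_prop) 0
    refine (this.eventually (gt_mem_nhds ?_)).filter_mono nhdsWithin_le_nhds
    norm_num
  obtain ⟨t₀, ht₀, hδ⟩ := mem_nhdsGT_iff_exists_Ioc_subset.1 hδ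
  set c : ℝ := (m : ℝ) + 1 / 2 with hc
  have hm : (0 : ℝ) ≤ m := Nat.cast_nonneg m
  set g : ℝ → ℝ := fun t =>
    t ^ (2 * m) * ((t * deriv W t - W t / 2) ^ 2 + c ^ 2 * W t ^ 2) with hg
  have hder : ∀ t : ℝ, 0 < t → HasDerivAt g
      (((2 * m : ℕ) : ℝ) * t ^ (2 * m - 1) *
          ((t * deriv W t - W t / 2) ^ 2 + c ^ 2 * W t ^ 2) +
        t ^ (2 * m) * (2 * (t * deriv W t - W t / 2) *
          (deriv W t + t * ((1 / 4 - κ / t - (1 / 4 - (m : ℝ) ^ 2) / t ^ 2) * W t)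
            - deriv W t / 2) + c ^ 2 * (2 * W t * deriv W t))) t := by
    intro t ht
    have h1 := hW.hasDerivAt ht
    have h2 := hW.hasDerivAt_deriv ht
    have h3 := ((((hasDerivAt_id t).mul h2).sub (h1.div_const 2)).pow 2).add
      ((h1.pow 2).const_mul (c ^ 2))
    have h4 := (hasDerivAt_pow (2 * m) t).mul h3
    refine h4.congr_deriv ?_
    simp
  have hpos : ∀ t ∈ Set.Ioo 0 t₀, 0 ≤ deriv g t := by
    intro t ht
    rw [(hder t ht.1).deriv]
    have ht0 : t ≠ 0 := ht.1.ne'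
    have hd := hδ ⟨ht.1, ht.2.le⟩
    change |-(κ * t) + t ^ 2 / 4| < 1 / 4 at hd
    set δ := -(κ * t) + t ^ 2 / 4 with hδdef
    set P := W t
    set Q := t * deriv W t - W t / 2 with hQ
    have hpow : ((2 * m : ℕ) : ℝ) * t ^ (2 * m - 1) * t = ((2 * m : ℕ) : ℝ) * t ^ (2 * m) := by
      rcases Nat.eq_zero_or_pos m with h | h
      · simp [h]
      · rw [mul_assoc, ← pow_succ, Nat.sub_add_cancel (by omega)]
    have key : 0 ≤ c * (Q ^ 2 + c ^ 2 * P ^ 2) * 2 + 2 * P * Q * ((m : ℝ) ^ 2 + c ^ 2 + δ) := by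
      rw [abs_lt] at hd
      have e1 : (m : ℝ) ^ 2 + δ ≤ c ^ 2 := by rw [hc]; nlinarith
      have e2 : 0 ≤ (m : ℝ) ^ 2 + c ^ 2 + δ := by rw [hc]; nlinarith
      have hc0 : 0 < c := by rw [hc]; positivity
      have e3 : 0 ≤ 2 * c ^ 2 - ((m : ℝ) ^ 2 + c ^ 2 + δ) := by linarith
      have e4 : 0 ≤ c * (c * (Q ^ 2 + c ^ 2 * P ^ 2) * 2 +
          2 * P * Q * ((m : ℝ) ^ 2 + c ^ 2 + δ)) := by
        have : c * (c * (Q ^ 2 + c ^ 2 * P ^ 2) * 2 +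
          2 * P * Q * ((m : ℝ) ^ 2 + c ^ 2 + δ)) =
            (2 * c ^ 2 - ((m : ℝ) ^ 2 + c ^ 2 + δ)) * (Q ^ 2 + (c * P) ^ 2) +
            ((m : ℝ) ^ 2 + c ^ 2 + δ) * (Q + c * P) ^ 2 := by ring
        rw [this]
        positivity
      exact nonneg_of_mul_nonneg_right e4 hc0
    refine nonneg_of_mul_nonneg_left (b := t) ?_ ht.1
    -- The first-order system for `P` and `Q`: `hW'` and `e5` are `tP' = Q + P/2` and
    -- `tQ' = Q/2 + (m² + δ) P`.
    have hW' : t * deriv W t = Q + P / 2 := by rw [hQ]; ring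
    have e5 : t * (deriv W t + t * ((1 / 4 - κ / t - (1 / 4 - (m : ℝ) ^ 2) / t ^ 2) * P)
            - deriv W t / 2) = Q / 2 + ((m : ℝ) ^ 2 + δ) * P := by
      have : t * (t * ((1 / 4 - κ / t - (1 / 4 - (m : ℝ) ^ 2) / t ^ 2) * P)) =
          (t ^ 2 / 4 - κ * t - 1 / 4 + (m : ℝ) ^ 2) * P := by field_simp; ring
      rw [hδdef]
      linear_combination this + hW' / 2
    have e6 : (((2 * m : ℕ) : ℝ) * t ^ (2 * m - 1) * (Q ^ 2 + c ^ 2 * P ^ 2) +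
        t ^ (2 * m) * (2 * Q *
          (deriv W t + t * ((1 / 4 - κ / t - (1 / 4 - (m : ℝ) ^ 2) / t ^ 2) * P)
            - deriv W t / 2) + c ^ 2 * (2 * P * deriv W t))) * t =
        t ^ (2 * m) *
          (c * (Q ^ 2 + c ^ 2 * P ^ 2) * 2 + 2 * P * Q * ((m : ℝ) ^ 2 + c ^ 2 + δ)) := by
      have hcm : ((2 * m : ℕ) : ℝ) = 2 * c - 1 := by rw [hc]; push_cast; ring
      rw [hcm] at hpow ⊢
      linear_combination (Q ^ 2 + c ^ 2 * P ^ 2) * hpow + t ^ (2 * m) * 2 * Q * e5 +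
        t ^ (2 * m) * c ^ 2 * 2 * P * hW'
    rw [e6]
    have := ht.1
    positivity
  have hmono : MonotoneOn g (Set.Ioc 0 t₀) := by
    refine monotoneOn_of_deriv_nonneg (convex_Ioc 0 t₀)
      (fun t ht => (hder t ht.1).continuousAt.continuousWithinAt) ?_ ?_
    · rw [interior_Ioc]
      exact fun t ht => (hder t ht.1).differentiableAt.differentiableWithinAt
    · rw [interior_Ioc]
      exact hpos
  refine ⟨g t₀, ?_⟩
  filter_upwards [Ioc_mem_nhdsGT ht₀] with t ht
  exact hmono ht ⟨ht₀, le_rfl⟩ ht.2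

lemma IsWhittakerW.isBigO_zero {κ : ℝ} {m : ℕ} {W : ℝ → ℝ} (hW : IsWhittakerW κ m W) :
    W =O[𝓝[>] 0] (fun t : ℝ => t ^ (-(m : ℝ))) ∧
    (fun t => t * deriv W t) =O[𝓝[>] 0] (fun t : ℝ => t ^ (-(m : ℝ))) := by
  obtain ⟨C, hC⟩ := hW.energy_bound
  have hm : (0 : ℝ) ≤ m := Nat.cast_nonneg m
  have key : ∀ᶠ t in 𝓝[>] (0 : ℝ), 0 < t ∧ t ^ (-(m : ℝ)) = (t ^ m)⁻¹ ∧
      |t ^ m * W t| ≤ 2 * Real.sqrt C ∧ |t ^ m * (t * deriv W t - W t / 2)| ≤ Real.sqrt C := by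
    filter_upwards [hC, self_mem_nhdsWithin] with t ht ht0
    have ht0 : 0 < t := ht0
    have e : t ^ (2 * m) * ((t * deriv W t - W t / 2) ^ 2 + ((m : ℝ) + 1 / 2) ^ 2 * W t ^ 2) =
      (t ^ m * (t * deriv W t - W t / 2)) ^ 2 + ((m : ℝ) + 1 / 2) ^ 2 * (t ^ m * W t) ^ 2 := by
      ring
    rw [e] at ht
    have e1 : 1 / 4 ≤ ((m : ℝ) + 1 / 2) ^ 2 := by nlinarith
    have e2 := sq_nonneg (t ^ m * W t)
    have e3 := sq_nonneg (t ^ m * (t * deriv W t - W t / 2))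
    have hC0 : 0 ≤ C := le_trans (by positivity) ht
    refine ⟨ht0, by rw [Real.rpow_neg ht0.le, Real.rpow_natCast], ?_, ?_⟩
    · apply abs_le_of_sq_le_sq _ (by positivity)
      rw [mul_pow 2, Real.sq_sqrt hC0]
      nlinarith
    · exact Real.abs_le_sqrt (by nlinarith)
  constructor
  · refine Asymptotics.IsBigO.of_bound (2 * Real.sqrt C) ?_
    filter_upwards [key] with t ⟨h0, h1, h2, h3⟩
    have hp : 0 < t ^ m := by positivity
    rw [h1, Real.norm_eq_abs, Real.norm_eq_abs, abs_of_pos (inv_pos.2 hp), ← div_eq_mul_inv,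
      le_div_iff₀ hp]
    rwa [abs_mul, abs_of_pos hp, mul_comm] at h2
  · refine Asymptotics.IsBigO.of_bound (2 * Real.sqrt C) ?_
    filter_upwards [key] with t ⟨h0, h1, h2, h3⟩
    have hp : 0 < t ^ m := by positivity
    rw [h1, Real.norm_eq_abs, Real.norm_eq_abs, abs_of_pos (inv_pos.2 hp), ← div_eq_mul_inv,
      le_div_iff₀ hp]
    have : t ^ m * (t * deriv W t) = t ^ m * (t * deriv W t - W t / 2) + t ^ m * W t / 2 := by
      ring
    rw [← abs_of_pos hp, ← abs_mul, mul_comm, this]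
    refine (abs_add_le _ _).trans ?_
    rw [abs_div, abs_two]
    linarith

/-! ### Behaviour at infinity and the recurrence for the Mellin transform -/

lemma tendsto_exp_mul_rpow (κ : ℝ) :
    Tendsto (fun t : ℝ => Real.exp (-t / 2) * t ^ κ) atTop (𝓝 0) := by
  refine (tendsto_rpow_mul_exp_neg_mul_atTop_nhds_zero κ (1 / 2) (by norm_num)).congr fun t => ?_
  rw [mul_comm]
  congr 2
  ring

lemma IsWhittakerW.tendsto_zero {κ μ : ℝ} {W : ℝ → ℝ} (hW : IsWhittakerW κ μ W) :
    Tendsto W atTop (𝓝 0) := by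
  have h := hW.2.2.mul (tendsto_exp_mul_rpow κ)
  rw [mul_zero] at h
  refine h.congr' ?_
  filter_upwards [eventually_gt_atTop 0] with t ht
  have : Real.exp (-t / 2) * t ^ κ ≠ 0 := by positivity
  field_simp

/-- A crude bound, enough because `W'` is always multiplied by `e^{-t/2}`: by the differential
equation `W'' → 0`, so `W'` grows at most linearly. -/
lemma IsWhittakerW.deriv_isBigO_top {κ μ : ℝ} {W : ℝ → ℝ} (hW : IsWhittakerW κ μ W) :
    deriv W =O[atTop] (fun t : ℝ => t) := by
  have h0 : Tendsto (fun y : ℝ => (1 / 4 - κ / y - (1 / 4 - μ ^ 2) / y ^ 2) * W y) atTop (𝓝 0) := by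
    have h1 : Tendsto (fun y : ℝ => κ / y) atTop (𝓝 0) := tendsto_const_nhds.div_atTop tendsto_id
    have h2 : Tendsto (fun y : ℝ => (1 / 4 - μ ^ 2) / y ^ 2) atTop (𝓝 0) :=
      tendsto_const_nhds.div_atTop (tendsto_pow_atTop (by norm_num))
    have := ((tendsto_const_nhds (x := (1 / 4 : ℝ))).sub h1 |>.sub h2).mul hW.tendsto_zero
    simpa using this
  have h1 := h0.norm.eventually (gt_mem_nhds (show ‖(0 : ℝ)‖ < 1 by simp))
  obtain ⟨T, hT⟩ := eventually_atTop.1 (h1.and (eventually_gt_atTop 0))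
  have hT0 : 0 < T := (hT T le_rfl).2
  refine Asymptotics.IsBigO.of_bound (‖deriv W T‖ + 1) ?_
  filter_upwards [eventually_ge_atTop T, eventually_ge_atTop 1] with t ht ht1
  have h2 := Convex.norm_image_sub_le_of_norm_hasDerivWithin_le (f := deriv W) (C := 1)
    (fun x hx => (hW.hasDerivAt_deriv (hT x hx).2).hasDerivWithinAt)
    (fun x hx => (hT x hx).1.le) (convex_Ici T) (Set.mem_Ici.2 le_rfl) (Set.mem_Ici.2 ht)
  have h3 : ‖deriv W t‖ ≤ ‖deriv W T‖ + ‖deriv W t - deriv W T‖ := by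
    have := norm_add_le (deriv W T) (deriv W t - deriv W T)
    simpa using this
  rw [Real.norm_eq_abs (t - T), Real.norm_eq_abs t] at *
  rw [abs_of_nonneg (by linarith : 0 ≤ t - T)] at h2
  rw [abs_of_nonneg (by linarith : 0 ≤ t)]
  nlinarith [norm_nonneg (deriv W T)]

/-- The Mellin transform `∫₀^∞ t^{s-1} e^{-t/2} W(t) dt` at a real point `s`. It is `0` by
convention when the integral diverges. -/
def whittakerMellin (W : ℝ → ℝ) (s : ℝ) : ℝ :=
  ∫ t in Set.Ioi (0 : ℝ), t ^ (s - 1) * (Real.exp (-t / 2) * W t)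

lemma exp_neg_half_isBigO_zero : (fun t : ℝ => Real.exp (-t / 2)) =O[𝓝[>] 0] (1 : ℝ → ℝ) := by
  have : Tendsto (fun t : ℝ => Real.exp (-t / 2)) (𝓝[>] 0) (𝓝 (Real.exp (-0 / 2))) :=
    (Continuous.tendsto (by fun_prop) 0).mono_left nhdsWithin_le_nhds
  exact this.isBigO_one ℝ

lemma IsWhittakerW.integrable {κ : ℝ} {m : ℕ} {W : ℝ → ℝ} (hW : IsWhittakerW κ m W) {s : ℝ}
    (hs : (m : ℝ) < s) :
    IntegrableOn (fun t : ℝ => t ^ (s - 1) * (Real.exp (-t / 2) * W t)) (Set.Ioi 0) := by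
  refine mellin_convergent_of_isBigO_scalar (a := s + 1) (b := m) ?_ ?_ (by linarith) ?_ hs
  · refine ContinuousOn.locallyIntegrableOn ?_ measurableSet_Ioi
    exact (Continuous.continuousOn (by fun_prop)).mul hW.continuousOn
  · have h1 : (fun t : ℝ => Real.exp (-t / 2)) =O[atTop] (fun t : ℝ => t ^ (-(s + 1))) := by
      refine ((isLittleO_exp_neg_mul_rpow_atTop (a := 1 / 2) (by norm_num)
        (-(s + 1))).isBigO).congr_left fun t => ?_
      congr 1
      ring
    simpa using h1.mul (hW.tendsto_zero.isBigO_one ℝ)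
  · simpa using exp_neg_half_isBigO_zero.mul hW.isBigO_zero.1

/-- The recurrence is the vanishing of the integral of `Φ'`, where
`Φ = t^{s+1} e^{-t/2} W' - (t^{s+1} e^{-t/2})' W` tends to `0` at both ends. -/
lemma IsWhittakerW.mellin_add_one {κ : ℝ} {m : ℕ} {W : ℝ → ℝ} (hW : IsWhittakerW κ m W) {s : ℝ}
    (hs : (m : ℝ) < s) :
    (s + 1 - κ) * whittakerMellin W (s + 1) =
      (s + 1 / 2 + m) * (s + 1 / 2 - m) * whittakerMellin W s := by
  set Φ : ℝ → ℝ := fun t => t ^ (s + 1) * Real.exp (-t / 2) * deriv W t -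
    ((s + 1) * t ^ s * Real.exp (-t / 2) - t ^ (s + 1) * Real.exp (-t / 2) / 2) * W t with hΦ
  set φ : ℝ → ℝ := fun t => (s + 1 - κ) * (t ^ (s + 1 - 1) * (Real.exp (-t / 2) * W t)) -
    (s + 1 / 2 + m) * (s + 1 / 2 - m) * (t ^ (s - 1) * (Real.exp (-t / 2) * W t)) with hφ
  have hm : (0 : ℝ) ≤ m := Nat.cast_nonneg m
  have i1 := (hW.integrable (by linarith : (m : ℝ) < s + 1)).const_mul (s + 1 - κ)
  have i2 := (hW.integrable hs).const_mul ((s + 1 / 2 + m) * (s + 1 / 2 - m))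
  have hder : ∀ t ∈ Set.Ioi (0 : ℝ), HasDerivAt Φ (φ t) t := by
    intro t ht
    have ht : 0 < t := ht
    have e1 := Real.hasDerivAt_rpow_const (x := t) (p := s + 1) (Or.inl ht.ne')
    have e2 := Real.hasDerivAt_rpow_const (x := t) (p := s) (Or.inl ht.ne')
    have e3 : HasDerivAt (fun t : ℝ => Real.exp (-t / 2)) (Real.exp (-t / 2) * (-1 / 2)) t :=
      (((hasDerivAt_id t).neg).div_const 2).exp
    have e4 := hW.hasDerivAt ht
    have e5 := hW.hasDerivAt_deriv ht
    refine (((e1.mul e3).mul e5).sub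
      ((((e2.const_mul (s + 1)).mul e3).sub ((e1.mul e3).div_const 2)).mul e4)).congr_deriv ?_
    have r1 : t ^ (s + 1) = t ^ (s - 1) * t ^ 2 := by
      rw [← Real.rpow_natCast, ← Real.rpow_add ht]; congr 1; push_cast; ring
    have r2 : t ^ s = t ^ (s - 1) * t := by
      rw [← Real.rpow_add_one ht.ne']; congr 1; ring
    have r3 : s + 1 - 1 = s := by ring
    simp only [hφ, r3, r1, r2, Pi.mul_apply, Pi.sub_apply]
    field_simp
    ring
  have hexp : ∀ p : ℝ, Tendsto (fun t : ℝ => t ^ p * Real.exp (-t / 2)) atTop (𝓝 0) := fun p =>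
    (tendsto_exp_mul_rpow p).congr fun t => mul_comm _ _
  have htop : Tendsto Φ atTop (𝓝 0) := by
    have a1 : Tendsto (fun t : ℝ => t ^ (s + 1) * Real.exp (-t / 2) * deriv W t) atTop (𝓝 0) := by
      have := (Asymptotics.isBigO_refl (fun t : ℝ => t ^ (s + 1) * Real.exp (-t / 2))
        atTop).mul hW.deriv_isBigO_top
      refine this.trans_tendsto ((hexp (s + 2)).congr' ?_)
      filter_upwards [eventually_gt_atTop 0] with t ht
      rw [show s + 2 = s + 1 + 1 by ring, Real.rpow_add_one ht.ne']
      ring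
    have a2 := ((((hexp s).const_mul (s + 1)).sub ((hexp (s + 1)).div_const 2))).mul
      hW.tendsto_zero
    have := a1.sub a2
    simp only [mul_zero, zero_div, sub_zero] at this
    refine this.congr fun t => ?_
    simp only [hΦ]
    ring
  have hpow : ∀ p : ℝ, 0 < p → Tendsto (fun t : ℝ => t ^ p) (𝓝[>] 0) (𝓝 0) := fun p hp => by
    have := (Real.continuousAt_rpow_const 0 p (Or.inr hp.le)).tendsto
    rw [Real.zero_rpow hp.ne'] at this
    exact this.mono_left nhdsWithin_le_nhds
  have hW0 : ∀ (g : ℝ → ℝ) (p : ℝ), g =O[𝓝[>] 0] (fun t : ℝ => t ^ (-(m : ℝ))) → (m : ℝ) < p →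
      Tendsto (fun t => t ^ p * Real.exp (-t / 2) * g t) (𝓝[>] 0) (𝓝 0) := by
    intro g p hg hp
    have := ((Asymptotics.isBigO_refl (fun t : ℝ => t ^ p) (𝓝[>] 0)).mul
      exp_neg_half_isBigO_zero).mul hg
    refine this.trans_tendsto ((hpow (p - m) (by linarith)).congr' ?_)
    filter_upwards [self_mem_nhdsWithin] with t ht
    rw [sub_eq_add_neg, Real.rpow_add ht]
    simp
  have hzero : Tendsto Φ (𝓝[>] 0) (𝓝 0) := by
    have a1 := hW0 _ s hW.isBigO_zero.2 hs
    have a2 := hW0 _ s hW.isBigO_zero.1 hs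
    have a3 := hW0 _ (s + 1) hW.isBigO_zero.1 (by linarith)
    have := a1.sub ((a2.const_mul (s + 1)).sub (a3.div_const 2))
    simp only [mul_zero, zero_div, sub_zero] at this
    refine this.congr' ?_
    filter_upwards [self_mem_nhdsWithin] with t ht
    have ht : 0 < t := ht
    simp only [hΦ]
    rw [Real.rpow_add_one ht.ne']
    ring
  have h := integral_Ioi_deriv_mul_eq_sub (u := Φ) (v := 1) (u' := φ) (v' := 0) (a := (0 : ℝ))
    (a' := 0) (b' := 0) hder (fun x _ => hasDerivAt_const x (1 : ℝ))
    (by rw [mul_one, mul_zero, add_zero]; exact i1.sub i2) (by simpa using hzero) (by simpa using htop)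
  simp only [Pi.one_apply, mul_one, Pi.zero_apply, mul_zero, add_zero, sub_zero, hφ] at h
  rw [integral_sub i1 i2, integral_const_mul, integral_const_mul] at h
  exact sub_eq_zero.1 h

/-! ### Asymptotics and the closed form of the Mellin transform -/

lemma Gamma_add_natCast {x : ℝ} (hx : 0 < x) (N : ℕ) :
    Real.Gamma (x + N) = Real.Gamma x * ∏ j ∈ Finset.range N, (x + j) := by
  induction N with
  | zero => simp
  | succ N ih =>
    rw [Finset.prod_range_succ, ← mul_assoc, ← ih, Nat.cast_succ, ← add_assoc,
      Real.Gamma_add_one (by positivity), mul_comm]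

/-- Euler's limit formula in the form `Γ(x + N + 1) ∼ N^x N!`. -/
lemma tendsto_Gamma_div {x : ℝ} (hx : 0 < x) :
    Tendsto (fun N : ℕ => Real.Gamma (x + (N + 1 : ℕ)) / ((N : ℝ) ^ x * (N.factorial : ℝ)))
      atTop (𝓝 1) := by
  have hG : Real.Gamma x ≠ 0 := (Real.Gamma_pos_of_pos hx).ne'
  have h := (tendsto_const_nhds (x := Real.Gamma x)).div (Real.GammaSeq_tendsto_Gamma x) hG
  rw [div_self hG] at h
  refine h.congr fun N => ?_
  have : ∏ j ∈ Finset.range (N + 1), (x + (j : ℝ)) ≠ 0 :=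
    Finset.prod_ne_zero_iff.2 fun j _ => by positivity
  rw [Gamma_add_natCast hx, Pi.div_apply, Real.GammaSeq, div_div_eq_mul_div]

lemma tendsto_pow_div_Gamma {x : ℝ} (hx : 0 < x) (T : ℝ) :
    Tendsto (fun N : ℕ => T ^ (N + 1) / Real.Gamma (x + (N + 1 : ℕ))) atTop (𝓝 0) := by
  have h1 := (FloorSemiring.tendsto_pow_div_factorial_atTop T).const_mul T
  have h2 : Tendsto (fun N : ℕ => ((N : ℝ) ^ x)⁻¹) atTop (𝓝 0) :=
    ((tendsto_rpow_atTop hx).comp tendsto_natCast_atTop_atTop).inv_tendsto_atTop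
  have h3 := (h1.mul h2).div (tendsto_Gamma_div hx) one_ne_zero
  simp only [mul_zero, zero_div] at h3
  refine h3.congr' ?_
  filter_upwards [eventually_gt_atTop 0] with N hN
  have h4 : (0 : ℝ) < (N : ℝ) ^ x := Real.rpow_pos_of_pos (by exact_mod_cast hN) _
  have h5 : (N.factorial : ℝ) ≠ 0 := by positivity
  have h6 : Real.Gamma (x + (N + 1 : ℕ)) ≠ 0 := (Real.Gamma_pos_of_pos (by positivity)).ne'
  simp only [Pi.div_apply]
  field_simp
  ring

/-- `F(s + N) ∼ Γ(s + κ + N)`: the difference is `∫ t^N h(t) dt` with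
`h = t^{s-1} e^{-t/2} (W - e^{-t/2} t^κ)`. The part `t ≤ T` is at most `T^N ∫ |h|`, which is negligible
against `Γ(s + κ + N)`, and on `t ≥ T` the integrand is at most `ε/2` times that of
`Γ(s + κ + N)`. -/
lemma IsWhittakerW.tendsto_mellin {κ : ℝ} {m : ℕ} {W : ℝ → ℝ} (hW : IsWhittakerW κ m W) {s : ℝ}
    (hs : (m : ℝ) < s) (hsκ : 0 < s + κ) :
    Tendsto (fun N : ℕ => whittakerMellin W (s + (N + 1 : ℕ)) / Real.Gamma (s + κ + (N + 1 : ℕ)))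
      atTop (𝓝 1) := by
  set h : ℝ → ℝ := fun t =>
    t ^ (s - 1) * (Real.exp (-t / 2) * W t) - Real.exp (-t) * t ^ (s + κ - 1) with hh
  have hGi : ∀ M : ℕ, IntegrableOn (fun t : ℝ => Real.exp (-t) * t ^ (s + κ + M - 1))
      (Set.Ioi 0) := fun M => Real.GammaIntegral_convergent (by positivity)
  have hFi : ∀ M : ℕ, IntegrableOn
      (fun t : ℝ => t ^ (s + M - 1) * (Real.exp (-t / 2) * W t)) (Set.Ioi 0) := fun M =>
    hW.integrable (by have : (0 : ℝ) ≤ M := Nat.cast_nonneg M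
                      linarith)
  have hsplit : ∀ M : ℕ, ∀ t ∈ Set.Ioi (0 : ℝ), t ^ (s + M - 1) * (Real.exp (-t / 2) * W t) -
      Real.exp (-t) * t ^ (s + κ + M - 1) = t ^ M * h t := by
    intro M t ht
    rw [show s + M - 1 = s - 1 + M by ring, show s + κ + M - 1 = s + κ - 1 + M by ring,
      Real.rpow_add ht, Real.rpow_add ht, Real.rpow_natCast]
    simp only [hh]
    ring
  have hInt : ∀ M : ℕ, IntegrableOn (fun t => t ^ M * h t) (Set.Ioi 0) := fun M =>
    ((hFi M).sub (hGi M)).congr_fun (hsplit M) measurableSet_Ioi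
  have hval : ∀ M : ℕ, ∫ t in Set.Ioi (0 : ℝ), t ^ M * h t =
      whittakerMellin W (s + M) - Real.Gamma (s + κ + M) := by
    intro M
    rw [Real.Gamma_eq_integral (by positivity), whittakerMellin, ← integral_sub (hFi M) (hGi M)]
    exact (setIntegral_congr_fun measurableSet_Ioi (hsplit M)).symm
  have hInt0 : IntegrableOn h (Set.Ioi 0) := by simpa using hInt 0
  set A := ∫ t in Set.Ioi (0 : ℝ), |h t| with hA
  rw [Metric.tendsto_atTop']
  intro ε hε
  have hε2 : 0 < ε / 2 := by positivity
  obtain ⟨T, hT⟩ := eventually_atTop.1 ((Metric.tendsto_nhds.1 hW.2.2 (ε / 2) hε2).and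
    (eventually_gt_atTop 0))
  have hT0 : 0 < T := (hT T le_rfl).2
  have hpt : ∀ M : ℕ, ∀ t ∈ Set.Ioi (0 : ℝ),
      |t ^ M * h t| ≤ T ^ M * |h t| + ε / 2 * (Real.exp (-t) * t ^ (s + κ + M - 1)) := by
    intro M t ht
    have ht : 0 < t := ht
    rw [abs_mul, abs_of_pos (pow_pos ht M)]
    rcases le_total t T with h1 | h1
    · have : t ^ M * |h t| ≤ T ^ M * |h t| := by gcongr
      have : 0 ≤ ε / 2 * (Real.exp (-t) * t ^ (s + κ + M - 1)) := by positivity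
      linarith
    · have h2 := (hT t h1).1
      have hD : 0 < Real.exp (-t / 2) * t ^ κ := by positivity
      rw [Real.dist_eq, div_sub_one hD.ne', abs_div, abs_of_pos hD, div_lt_iff₀ hD] at h2
      have h3 : h t = t ^ (s - 1) * Real.exp (-t / 2) * (W t - Real.exp (-t / 2) * t ^ κ) := by
        simp only [hh]
        rw [show s + κ - 1 = s - 1 + κ by ring, Real.rpow_add ht,
          show -t = -t / 2 + -t / 2 by ring, Real.exp_add]
        ring_nf
      have h4 : t ^ M * |h t| ≤ ε / 2 * (Real.exp (-t) * t ^ (s + κ + M - 1)) := by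
        rw [h3, abs_mul, abs_of_pos (by positivity : 0 < t ^ (s - 1) * Real.exp (-t / 2))]
        calc _ ≤ t ^ M * (t ^ (s - 1) * Real.exp (-t / 2) *
              (ε / 2 * (Real.exp (-t / 2) * t ^ κ))) := by gcongr
          _ = _ := by
            rw [show s + κ + M - 1 = s - 1 + κ + M by ring, Real.rpow_add ht, Real.rpow_add ht,
              Real.rpow_natCast, show Real.exp (-t) = Real.exp (-t / 2) * Real.exp (-t / 2) by
                rw [← Real.exp_add]; congr 1; ring]
            ring
      have : 0 ≤ T ^ M * |h t| := by positivity
      linarith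
  have hbound : ∀ M : ℕ, |whittakerMellin W (s + M) - Real.Gamma (s + κ + M)| ≤
      T ^ M * A + ε / 2 * Real.Gamma (s + κ + M) := by
    intro M
    rw [← hval, hA, Real.Gamma_eq_integral (by positivity), ← integral_const_mul,
      ← integral_const_mul, ← integral_add (hInt0.abs.const_mul _) ((hGi M).const_mul _)]
    refine abs_integral_le_integral_abs.trans ?_
    exact setIntegral_mono_on (hInt M).abs ((hInt0.abs.const_mul _).add ((hGi M).const_mul _))
      measurableSet_Ioi (hpt M)
  have hlim := (tendsto_pow_div_Gamma hsκ T).mul_const A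
  rw [zero_mul] at hlim
  obtain ⟨N₀, hN₀⟩ := eventually_atTop.1 (hlim.eventually (gt_mem_nhds hε2))
  refine ⟨N₀, fun N hN => ?_⟩
  have hG : 0 < Real.Gamma (s + κ + (N + 1 : ℕ)) := Real.Gamma_pos_of_pos (by positivity)
  have h1 := hbound (N + 1)
  have h2 := hN₀ N hN.le
  rw [Real.dist_eq, div_sub_one hG.ne', abs_div, abs_of_pos hG, div_lt_iff₀ hG]
  rw [div_mul_eq_mul_div, div_lt_iff₀ hG] at h2
  linarith

/-- The closed form of the Mellin transform. The ratio `R N` of its two sides at `s + N` does not depend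
on `N` and tends to `1`. -/
theorem IsWhittakerW.mellin_eq {κ : ℝ} {m : ℕ} {W : ℝ → ℝ} (hW : IsWhittakerW κ m W) {s : ℝ}
    (hs : (m : ℝ) < s) (hsκ : 0 < s + κ) (hsκ' : 0 < s + 1 - κ) :
    whittakerMellin W s =
      Real.Gamma (s + 1 / 2 + m) * Real.Gamma (s + 1 / 2 - m) / Real.Gamma (s + 1 - κ) := by
  have hm : (0 : ℝ) ≤ m := Nat.cast_nonneg m
  have ha : 0 < s + 1 / 2 + m := by linarith
  have hb : 0 < s + 1 / 2 - m := by linarith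
  set R : ℕ → ℝ := fun N => whittakerMellin W (s + N) * Real.Gamma (s + 1 - κ + N) /
    (Real.Gamma (s + 1 / 2 + m + N) * Real.Gamma (s + 1 / 2 - m + N)) with hR
  have hstep : ∀ N, R (N + 1) = R N := by
    intro N
    have h1 := hW.mellin_add_one (s := s + N) (by have : (0 : ℝ) ≤ N := Nat.cast_nonneg N
                                                  linarith)
    have hc' : 0 < s + 1 - κ + N := by positivity
    have ha' : 0 < s + 1 / 2 + m + N := by positivity
    have hb' : 0 < s + 1 / 2 - m + N := by positivity
    have ga := Real.Gamma_pos_of_pos ha'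
    have gb := Real.Gamma_pos_of_pos hb'
    simp only [hR, Nat.cast_succ, ← add_assoc]
    rw [Real.Gamma_add_one hc'.ne', Real.Gamma_add_one ha'.ne', Real.Gamma_add_one hb'.ne',
      div_eq_div_iff (by positivity) (by positivity)]
    linear_combination Real.Gamma (s + 1 - κ + N) * Real.Gamma (s + 1 / 2 + m + N) *
      Real.Gamma (s + 1 / 2 - m + N) * h1
  have hconst : ∀ N, R N = R 0 := fun N => by
    induction N with
    | zero => rfl
    | succ N ih => rw [hstep, ih]
  have hlim : Tendsto (fun N => R (N + 1)) atTop (𝓝 1) := by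
    have h := ((hW.tendsto_mellin hs hsκ).mul ((tendsto_Gamma_div hsκ).mul
      (tendsto_Gamma_div hsκ'))).div ((tendsto_Gamma_div ha).mul (tendsto_Gamma_div hb))
      (by norm_num)
    simp only [mul_one, div_one] at h
    refine h.congr' ?_
    filter_upwards [eventually_gt_atTop 0] with N hN
    have hN : (0 : ℝ) < N := by exact_mod_cast hN
    have hf : (0 : ℝ) < N.factorial := by positivity
    have ga := Real.Gamma_pos_of_pos (show 0 < s + 1 / 2 + m + (N + 1 : ℕ) by positivity)
    have gb := Real.Gamma_pos_of_pos (show 0 < s + 1 / 2 - m + (N + 1 : ℕ) by positivity)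
    have gc := Real.Gamma_pos_of_pos (show 0 < s + κ + (N + 1 : ℕ) by positivity)
    have hp : (N : ℝ) ^ (s + κ) * (N : ℝ) ^ (s + 1 - κ) =
        (N : ℝ) ^ (s + 1 / 2 + m) * (N : ℝ) ^ (s + 1 / 2 - m) := by
      rw [← Real.rpow_add hN, ← Real.rpow_add hN]
      congr 1
      ring
    have p1 := Real.rpow_pos_of_pos hN (s + κ)
    have p2 := Real.rpow_pos_of_pos hN (s + 1 - κ)
    have p3 := Real.rpow_pos_of_pos hN (s + 1 / 2 + m)
    have p4 := Real.rpow_pos_of_pos hN (s + 1 / 2 - m)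
    simp only [hR, Pi.div_apply]
    generalize (N : ℝ) ^ (s + κ) = P1 at *
    generalize (N : ℝ) ^ (s + 1 - κ) = P2 at *
    generalize (N : ℝ) ^ (s + 1 / 2 + m) = P3 at *
    generalize (N : ℝ) ^ (s + 1 / 2 - m) = P4 at *
    generalize Real.Gamma (s + 1 / 2 + m + (N + 1 : ℕ)) = G1 at *
    generalize Real.Gamma (s + 1 / 2 - m + (N + 1 : ℕ)) = G2 at *
    generalize Real.Gamma (s + κ + (N + 1 : ℕ)) = G3 at *
    generalize Real.Gamma (s + 1 - κ + (N + 1 : ℕ)) = G4 at *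
    generalize whittakerMellin W (s + (N + 1 : ℕ)) = F at *
    have e : F / G3 * (G3 / (P1 * (N.factorial : ℝ)) * (G4 / (P2 * (N.factorial : ℝ)))) /
        (G1 / (P3 * (N.factorial : ℝ)) * (G2 / (P4 * (N.factorial : ℝ)))) =
        F * G4 / (G1 * G2) * ((P3 * P4) / (P1 * P2)) := by field_simp
    rw [e, ← hp, div_self (by positivity), mul_one]
  have hR0 : R 0 = 1 :=
    tendsto_nhds_unique (tendsto_const_nhds.congr fun N => (hconst (N + 1)).symm) hlim
  have ga := Real.Gamma_pos_of_pos ha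
  have gb := Real.Gamma_pos_of_pos hb
  have gc := Real.Gamma_pos_of_pos hsκ'
  simp only [hR, Nat.cast_zero, add_zero] at hR0
  rw [div_eq_one_iff_eq (by positivity)] at hR0
  rw [eq_div_iff gc.ne', hR0]

/-! ### Zeta values, powers, and the two summands -/

lemma cos_pi_mul_natCast_ne_zero (m : ℕ) : Real.cos (Real.pi * m) ≠ 0 := by
  rw [mul_comm, Real.cos_nat_mul_pi]
  exact pow_ne_zero _ (by norm_num)

/-- The functional equation at `s = 2m`, in the shape required by `IsWhittakerW.term_eval` for
`j = -m`. -/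
lemma zeta_one_sub_even {m : ℕ} (hm : m ≠ 0) :
    riemannZeta (1 + 2 * ((-(m : ℝ) : ℝ) : ℂ)) =
      ((2 * (2 * Real.pi) ^ (2 * (-(m : ℝ))) * Real.cos (Real.pi * m) : ℝ) : ℂ) *
        (riemannZeta (2 * m : ℕ) * Complex.Gamma (2 * m : ℕ)) := by
  have h := riemannZeta_one_sub (s := ((2 * m : ℕ) : ℂ)) (fun n hn => by
      have h1 : (((2 * m + n : ℕ) : ℂ)) = 0 := by rw [Nat.cast_add, hn]; ring
      rw [Nat.cast_eq_zero] at h1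
      omega) (fun h1 => by
      rw [Nat.cast_eq_one] at h1
      omega)
  rw [show 1 + 2 * ((-(m : ℝ) : ℝ) : ℂ) = 1 - ((2 * m : ℕ) : ℂ) by push_cast; ring, h]
  rw [Complex.ofReal_mul, Complex.ofReal_mul, Complex.ofReal_cpow (by positivity),
    Complex.ofReal_cos]
  push_cast
  rw [show (Real.pi : ℂ) * (2 * m) / 2 = Real.pi * m by ring,
    show 2 * -(m : ℂ) = -(2 * m) by ring]
  ring

/-- The functional equation in the limit `s → -2m`, where `Γ` has a pole compensated by the
trivial zero of `ζ`. -/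
lemma zeta_one_add_even {m : ℕ} (hm : m ≠ 0) :
    riemannZeta (1 + 2 * ((m : ℝ) : ℂ)) =
      ((2 * (2 * Real.pi) ^ (2 * (m : ℝ)) * Real.cos (Real.pi * m) : ℝ) : ℂ) *
        limUnder (𝓝[≠] (-((2 * m : ℕ) : ℂ))) fun s : ℂ => riemannZeta s * Complex.Gamma s := by
  set r : ℂ := ((2 * m : ℕ) : ℂ) with hr
  have hc : Complex.cos (Real.pi * m) ≠ 0 := by
    have := cos_pi_mul_natCast_ne_zero m
    rw [← Complex.ofReal_natCast, ← Complex.ofReal_mul, ← Complex.ofReal_cos]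
    exact_mod_cast this
  have h2π : (2 * Real.pi : ℂ) ≠ 0 := by simp [Real.pi_ne_zero]
  have hcont : ContinuousAt
      (fun s : ℂ => 2 * (2 * (Real.pi : ℂ)) ^ (-s) * Complex.cos (Real.pi * s / 2)) (-r) := by
    refine ContinuousAt.mul (continuousAt_const.mul ?_) (by fun_prop)
    exact continuousAt_neg.const_cpow (Or.inl h2π)
  have hcos : Complex.cos (Real.pi * -r / 2) = Complex.cos (Real.pi * m) := by
    rw [hr, ← Complex.cos_neg (Real.pi * m)]
    congr 1
    push_cast
    ring
  have hne : 2 * (2 * (Real.pi : ℂ)) ^ (-(-r)) * Complex.cos (Real.pi * -r / 2) ≠ 0 := by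
    rw [hcos]
    exact mul_ne_zero (mul_ne_zero two_ne_zero (by simp [Complex.cpow_eq_zero_iff, h2π])) hc
  have hζ : ContinuousAt (fun s : ℂ => riemannZeta (1 - s)) (-r) := by
    refine ContinuousAt.comp (g := riemannZeta) (f := fun s : ℂ => 1 - s) ?_ (by fun_prop)
    refine (differentiableAt_riemannZeta ?_).continuousAt
    rw [hr, sub_neg_eq_add]
    simpa using hm
  have hlim := (hζ.div hcont hne).tendsto.mono_left (nhdsWithin_le_nhds (s := {-r}ᶜ))
  have hev : ∀ᶠ s : ℂ in 𝓝[≠] (-r), riemannZeta (1 - s) /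
      (2 * (2 * (Real.pi : ℂ)) ^ (-s) * Complex.cos (Real.pi * s / 2)) =
        riemannZeta s * Complex.Gamma s := by
    -- The non-positive integers and `1` are isolated, so a punctured neighbourhood avoids them.
    have hInt : ∀ᶠ s : ℂ in 𝓝[≠] (-r), ∀ k : ℤ, s ≠ k := by
      have hb : Metric.ball (-r) 1 ∈ 𝓝[≠] (-r) :=
        nhdsWithin_le_nhds (Metric.ball_mem_nhds _ one_pos)
      filter_upwards [hb, self_mem_nhdsWithin] with s hs hsne k hk
      rw [Metric.mem_ball, dist_eq_norm, hk, hr, sub_neg_eq_add] at hs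
      have h1 : ((k : ℂ) + ((2 * m : ℕ) : ℂ)) = ((k + (2 * m : ℕ) : ℤ) : ℂ) := by push_cast; ring
      rw [h1, Complex.norm_intCast, ← Int.cast_abs] at hs
      have h2 : |k + (2 * m : ℕ)| < 1 := by exact_mod_cast hs
      rw [Int.abs_lt_one_iff] at h2
      apply hsne
      rw [Set.mem_singleton_iff, hk, hr, eq_neg_iff_add_eq_zero, h1, h2, Int.cast_zero]
    filter_upwards [hInt, (hcont.eventually_ne hne).filter_mono nhdsWithin_le_nhds] with s hs hs'
    rw [div_eq_iff hs', riemannZeta_one_sub (fun k => by simpa using hs (-k))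
      (by simpa using hs 1)]
    ring
  have hL := (hlim.congr' hev).limUnder_eq
  rw [hL]
  simp only [Pi.div_apply]
  rw [hcos] at *
  have e1 : ((2 * (2 * Real.pi) ^ (2 * (m : ℝ)) * Real.cos (Real.pi * m) : ℝ) : ℂ) =
      2 * (2 * (Real.pi : ℂ)) ^ (-(-r)) * Complex.cos (Real.pi * m) := by
    rw [Complex.ofReal_mul, Complex.ofReal_mul, Complex.ofReal_cpow (by positivity),
      Complex.ofReal_cos, hr]
    push_cast
    rw [neg_neg]
  rw [e1, mul_div_cancel₀ _ hne, hr]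
  push_cast
  congr 1
  ring

/-- The factors of `2`, `π` and `n` in the summand of index `j = ±m₂`; the factor `2 (2π)^{2j}` comes from
the functional equation for `ζ(1 + 2j)`. -/
lemma power_identity {n : ℝ} (hn : 0 < n) {K : ℕ} (hK : 0 < K) (m j : ℝ) :
    (4 * Real.pi * n) ^ (2 * K - 1) / n ^ (m + 1 / 2) *
      (Real.pi ^ (-(1 / 2 + j)) * (4 * Real.pi * n) ^ (-(K + j - 1 / 2)) *
        (2 * (2 * Real.pi) ^ (2 * j))) =
      2 ^ (2 * K) * Real.pi ^ (K - 1) * n ^ (K - 1 - j - m) := by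
  have hπ := Real.pi_pos
  have hK' : ((2 * K - 1 : ℕ) : ℝ) = 2 * K - 1 := by
    rw [Nat.cast_sub (by omega)]; push_cast; ring
  have hK'' : ((K - 1 : ℕ) : ℝ) = K - 1 := by rw [Nat.cast_sub (by omega)]; simp
  have h4 : Real.log 4 = 2 * Real.log 2 := by
    rw [show (4 : ℝ) = 2 ^ 2 by norm_num, Real.log_pow]; norm_num
  refine Real.log_injOn_pos (Set.mem_Ioi.2 (by positivity)) (Set.mem_Ioi.2 (by positivity)) ?_
  rw [Real.log_mul (by positivity) (by positivity), Real.log_div (by positivity) (by positivity),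
    Real.log_mul (by positivity) (by positivity), Real.log_mul (by positivity) (by positivity),
    Real.log_mul (by positivity) (by positivity), Real.log_mul (by positivity) (by positivity),
    Real.log_mul (by positivity) (by positivity), Real.log_pow, Real.log_pow, Real.log_pow,
    Real.log_rpow (by positivity), Real.log_rpow (by positivity), Real.log_rpow (by positivity),
    Real.log_rpow (by positivity), Real.log_rpow (by positivity),
    Real.log_mul (by positivity) (by positivity), Real.log_mul (by positivity) (by positivity),
    Real.log_mul (by positivity) (by positivity), h4, hK', hK'']
  push_cast
  ring

/-- The Gamma factor of `θ_{k₂}(1/2 + j)` cancels the denominator of the Mellin transform. -/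
lemma IsWhittakerW.theta_mul_mellin {k₁ k₂ m₁ : ℕ} {W : ℝ → ℝ} (hW : IsWhittakerW k₁ m₁ W)
    {j : ℝ} (hj : (m₁ : ℝ) + 1 ≤ k₁ + k₂ + j) (hj' : 0 ≤ k₂ + j) :
    theta k₂ (1 / 2 + j) * (whittakerMellin W (k₁ + k₂ + j - 1 / 2) : ℂ) =
      ((Real.pi ^ (-(1 / 2 + j)) * (Real.Gamma (k₁ + k₂ + j + m₁) *
        Real.Gamma (k₁ + k₂ + j - m₁)) : ℝ) : ℂ) * riemannZeta (1 + 2 * (j : ℂ)) := by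
  have hm : (0 : ℝ) ≤ m₁ := Nat.cast_nonneg _
  have hk : (0 : ℝ) ≤ k₁ := Nat.cast_nonneg _
  rw [hW.mellin_eq (by linarith) (by linarith) (by linarith), theta]
  have hG := (Real.Gamma_pos_of_pos (show 0 < 1 / 2 + j + k₂ by linarith)).ne'
  have e1 : (k₁ : ℝ) + k₂ + j - 1 / 2 + 1 - k₁ = 1 / 2 + j + k₂ := by ring
  have e2 : (k₁ : ℝ) + k₂ + j - 1 / 2 + 1 / 2 + m₁ = k₁ + k₂ + j + m₁ := by ring
  have e3 : (k₁ : ℝ) + k₂ + j - 1 / 2 + 1 / 2 - m₁ = k₁ + k₂ + j - m₁ := by ring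
  have e4 : 2 * ((1 / 2 + j : ℝ) : ℂ) = 1 + 2 * j := by push_cast; ring
  have e5 : (((1 / 2 + j : ℝ) : ℂ) + k₂) = ((1 / 2 + j + k₂ : ℝ) : ℂ) := by push_cast; ring
  rw [e1, e2, e3, e4, e5, Complex.Gamma_ofReal, ← Complex.ofReal_neg,
    ← Complex.ofReal_cpow Real.pi_pos.le]
  have hG' : (Real.Gamma (1 / 2 + j + k₂) : ℂ) ≠ 0 := by exact_mod_cast hG
  rw [Complex.ofReal_div, Complex.ofReal_mul, Complex.ofReal_mul, Complex.ofReal_mul]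
  generalize (Real.Gamma (1 / 2 + j + k₂) : ℂ) = G at *
  field_simp

/-- The summand of index `j = ±m₂`. The hypothesis `hX` stands for the functional equation, with `c`
the cosine and `X` the value of `ζΓ` at `-2j` (a limit when `j = m₂`). -/
lemma IsWhittakerW.term_eval {k₁ k₂ m₁ : ℕ} {W : ℝ → ℝ} (hW : IsWhittakerW k₁ m₁ W)
    {j : ℝ} (hj : (m₁ : ℝ) + 1 ≤ k₁ + k₂ + j) (hj' : 0 ≤ k₂ + j) (hK : 0 < k₁ + k₂)
    {n c : ℝ} (hn : 0 < n) {X : ℂ}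
    (hX : riemannZeta (1 + 2 * (j : ℂ)) = ((2 * (2 * Real.pi) ^ (2 * j) * c : ℝ) : ℂ) * X) :
    (((4 * Real.pi * n) ^ (2 * (k₁ + k₂) - 1) : ℝ) : ℂ) / ((n ^ ((m₁ : ℝ) + 1 / 2) : ℝ) : ℂ) *
      (theta k₂ (1 / 2 + j) * (((4 * Real.pi * n) ^ (-(k₁ + k₂ + j - 1 / 2)) *
        whittakerMellin W (k₁ + k₂ + j - 1 / 2) : ℝ) : ℂ)) =
      ((2 ^ (2 * (k₁ + k₂)) * Real.pi ^ (k₁ + k₂ - 1) * n ^ (k₁ + k₂ - 1 - j - m₁) * c *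
        (Real.Gamma (k₁ + k₂ + j + m₁) * Real.Gamma (k₁ + k₂ + j - m₁)) : ℝ) : ℂ) * X := by
  have h1 := hW.theta_mul_mellin hj hj'
  have h2 := power_identity hn hK m₁ j
  rw [hX] at h1
  rw [Nat.cast_add] at h2
  rw [← h2, Complex.ofReal_mul ((4 * Real.pi * n) ^ (-(k₁ + k₂ + j - 1 / 2)))]
  rw [mul_left_comm (theta _ _), h1]
  push_cast
  ring

lemma IsWhittakerW.scaled_integral {κ : ℝ} {m : ℕ} {W : ℝ → ℝ} (hW : IsWhittakerW κ m W)
    {a s : ℝ} (ha : 0 < a) (hs : (m : ℝ) < s) :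
    IntegrableOn (fun y => W (a * y) * Real.exp (-(a * y) / 2) * y ^ (s - 1)) (Set.Ioi 0) ∧
    ∫ y in Set.Ioi (0 : ℝ), W (a * y) * Real.exp (-(a * y) / 2) * y ^ (s - 1) =
      a ^ (-s) * whittakerMellin W s := by
  have hpt : ∀ y ∈ Set.Ioi (0 : ℝ),
      a ^ (1 - s) * ((a * y) ^ (s - 1) * (Real.exp (-(a * y) / 2) * W (a * y))) =
        W (a * y) * Real.exp (-(a * y) / 2) * y ^ (s - 1) := by
    intro y hy
    rw [Real.mul_rpow ha.le (le_of_lt hy), show 1 - s = -(s - 1) by ring, Real.rpow_neg ha.le]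
    have := Real.rpow_pos_of_pos ha (s - 1)
    field_simp
  constructor
  · have h := (integrableOn_Ioi_comp_mul_left_iff
      (fun t : ℝ => t ^ (s - 1) * (Real.exp (-t / 2) * W t)) 0 ha).2
      (by simpa using hW.integrable hs)
    exact IntegrableOn.congr_fun (h.const_mul (a ^ (1 - s))) hpt measurableSet_Ioi
  · rw [← setIntegral_congr_fun measurableSet_Ioi hpt, integral_const_mul,
      integral_comp_mul_left_Ioi (fun t : ℝ => t ^ (s - 1) * (Real.exp (-t / 2) * W t)) 0 ha,
      mul_zero, smul_eq_mul, ← mul_assoc, whittakerMellin]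
    congr 1
    rw [show -s = 1 - s - 1 by ring, Real.rpow_sub_one ha.ne', div_eq_mul_inv]

/-- **The boundary term `a_{n,0}`** in the holomorphic projection (equations (4.3)–(4.4)):
the Mellin-type integral of a Whittaker function against the constant term of a completed
Eisenstein series.  The a priori singular product `ζ(-r₂)Γ(-r₂)` is interpreted as the
(finite) limit `lim_{s → -r₂} ζ(s)Γ(s)`. -/
theorem boundary_term_a_n0 (k₁ k₂ m₁ m₂ : ℕ)
    (h₁ : m₁ ≤ k₁) (h₂ : m₂ ≤ k₂) (h₃ : m₁ + m₂ < k₁ + k₂)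
    (k d r₁ r₂ : ℕ)
    (hk : k = 2 * (k₁ + k₂)) (hd : d = k₁ + k₂ - m₁ - m₂ - 1)
    (hr₁ : r₁ = 2 * m₁) (hr₂ : r₂ = 2 * m₂) (hr₂0 : r₂ ≠ 0)
    (W : ℝ → ℝ → ℝ → ℝ) (hW : ∀ κ μ : ℝ, IsWhittakerW κ μ (W κ μ))
    (n : ℤ) (hn : 0 < n) :
    (-1 : ℂ) ^ k₂ * (((4 * Real.pi * (n : ℝ)) ^ (k - 1) : ℝ) : ℂ) / ((k - 2).factorial : ℂ) *
        ((sigmaZ r₁ n : ℂ) / (((n : ℝ) ^ ((m₁ : ℝ) + 1 / 2) : ℝ) : ℂ)) *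
        ∫ y in Set.Ioi (0 : ℝ),
          (W k₁ m₁ (4 * Real.pi * (n : ℝ) * y) : ℂ) *
            (theta k₂ ((m₂ : ℝ) + 1 / 2) * ((y ^ ((m₂ : ℝ) + 1 / 2) : ℝ) : ℂ)
              + theta k₂ (1 / 2 - (m₂ : ℝ)) * ((y ^ (1 / 2 - (m₂ : ℝ)) : ℝ) : ℂ)) *
            (Real.exp (-2 * Real.pi * (n : ℝ) * y) : ℂ) *
            ((y ^ ((k₁ : ℤ) + k₂ - 2) : ℝ) : ℂ)
      = (-1 : ℂ) ^ k₂ * 2 ^ k * (Real.pi : ℂ) ^ (k / 2 - 1) * (Real.cos (Real.pi * m₂) : ℂ) /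
          ((k - 2).factorial : ℂ) * (n : ℂ) ^ d * (sigmaZ r₁ n : ℂ) *
          ((n : ℂ) ^ r₂ * riemannZeta r₂ * Complex.Gamma r₂ * Complex.Gamma (d + 1) *
              Complex.Gamma ((k / 2 + m₁ - m₂ : ℕ) : ℂ)
            + (limUnder (𝓝[≠] (-(r₂ : ℂ))) fun s : ℂ => riemannZeta s * Complex.Gamma s) *
                Complex.Gamma ((k / 2 - m₁ + m₂ : ℕ) : ℂ) *
                Complex.Gamma ((r₁ : ℂ) + r₂ + d + 1)) := by
  -- `d` is kept as a variable: `k₁ + k₂ = d + m₁ + m₂ + 1` avoids truncated subtraction.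
  subst hk hr₁ hr₂
  have hm₂ : m₂ ≠ 0 := fun h => hr₂0 (by rw [h])
  have hWk := hW k₁ m₁
  have hnR : (0 : ℝ) < n := by exact_mod_cast hn
  have ha : 0 < 4 * Real.pi * (n : ℝ) := by positivity
  have hd' : d + m₁ + m₂ + 1 = k₁ + k₂ := by omega
  have hdR : (d : ℝ) + m₁ + m₂ + 1 = k₁ + k₂ := by exact_mod_cast hd'
  have hm₁R : (0 : ℝ) ≤ m₁ := Nat.cast_nonneg _
  have hm₂R : (0 : ℝ) ≤ m₂ := Nat.cast_nonneg _
  have hdR0 : (0 : ℝ) ≤ d := Nat.cast_nonneg _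
  have hk₂R : (m₂ : ℝ) ≤ k₂ := by exact_mod_cast h₂
  have hm₂R1 : (1 : ℝ) ≤ m₂ := by exact_mod_cast Nat.one_le_iff_ne_zero.2 hm₂
  set a : ℝ := 4 * Real.pi * (n : ℝ) with ha_def
  set sp : ℝ := k₁ + k₂ + (m₂ : ℝ) - 1 / 2 with hsp
  set sm : ℝ := k₁ + k₂ + (-(m₂ : ℝ)) - 1 / 2 with hsm
  obtain ⟨ip, vp⟩ := hWk.scaled_integral ha (s := sp) (by rw [hsp]; linarith)
  obtain ⟨im, vm⟩ := hWk.scaled_integral ha (s := sm) (by rw [hsm]; linarith)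
  -- The substitution `t = 4πny` turns the integral into two Mellin transforms of `W`.
  have hI : ∫ y in Set.Ioi (0 : ℝ),
          (W k₁ m₁ (a * y) : ℂ) *
            (theta k₂ ((m₂ : ℝ) + 1 / 2) * ((y ^ ((m₂ : ℝ) + 1 / 2) : ℝ) : ℂ)
              + theta k₂ (1 / 2 - (m₂ : ℝ)) * ((y ^ (1 / 2 - (m₂ : ℝ)) : ℝ) : ℂ)) *
            (Real.exp (-2 * Real.pi * (n : ℝ) * y) : ℂ) *
            ((y ^ ((k₁ : ℤ) + k₂ - 2) : ℝ) : ℂ) =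
      theta k₂ (1 / 2 + (m₂ : ℝ)) * ((a ^ (-sp) * whittakerMellin (W k₁ m₁) sp : ℝ) : ℂ) +
      theta k₂ (1 / 2 + -(m₂ : ℝ)) * ((a ^ (-sm) * whittakerMellin (W k₁ m₁) sm : ℝ) : ℂ) := by
    rw [← vp, ← vm, ← integral_complex_ofReal, ← integral_complex_ofReal,
      ← integral_const_mul, ← integral_const_mul,
      ← integral_add (ip.ofReal.const_mul _) (im.ofReal.const_mul _)]
    refine setIntegral_congr_fun measurableSet_Ioi fun y hy => ?_
    have hy : 0 < y := hy
    have e1 : y ^ (sp - 1) = y ^ ((m₂ : ℝ) + 1 / 2) * y ^ ((k₁ : ℤ) + k₂ - 2) := by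
      rw [← Real.rpow_intCast, ← Real.rpow_add hy, hsp]
      congr 1
      push_cast
      ring
    have e2 : y ^ (sm - 1) = y ^ (1 / 2 - (m₂ : ℝ)) * y ^ ((k₁ : ℤ) + k₂ - 2) := by
      rw [← Real.rpow_intCast, ← Real.rpow_add hy, hsm]
      congr 1
      push_cast
      ring
    have e3 : -(a * y) / 2 = -2 * Real.pi * (n : ℝ) * y := by rw [ha_def]; ring
    simp only [e1, e2, e3, Complex.ofReal_mul]
    rw [add_comm (1 / 2 : ℝ) (m₂ : ℝ), ← sub_eq_add_neg]
    ring
  have tp := hWk.term_eval (k₂ := k₂) (j := (m₂ : ℝ)) (by linarith) (by linarith) (by omega) hnR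
    (zeta_one_add_even hm₂)
  have tm := hWk.term_eval (k₂ := k₂) (j := -(m₂ : ℝ)) (by linarith) (by linarith) (by omega) hnR
    (zeta_one_sub_even hm₂)
  rw [← ha_def, ← hsp] at tp
  rw [← ha_def, ← hsm] at tm
  have n1 : (n : ℝ) ^ ((k₁ : ℝ) + k₂ - 1 - m₂ - m₁) = (n : ℝ) ^ d := by
    rw [← Real.rpow_natCast]; congr 1; linarith
  have n2 : (n : ℝ) ^ ((k₁ : ℝ) + k₂ - 1 - -(m₂ : ℝ) - m₁) = (n : ℝ) ^ d * (n : ℝ) ^ (2 * m₂) := by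
    rw [← pow_add, ← Real.rpow_natCast]; congr 1; push_cast; linarith
  have hhalf : 2 * (k₁ + k₂) / 2 = k₁ + k₂ := by omega
  have g1 : Complex.Gamma ((2 * m₁ : ℕ) + (2 * m₂ : ℕ) + d + 1) =
      (Real.Gamma (k₁ + k₂ + m₂ + m₁) : ℂ) := by
    rw [← Complex.Gamma_ofReal, ← hdR]; congr 1; push_cast; ring
  have g2 : Complex.Gamma ((k₁ + k₂ - m₁ + m₂ : ℕ) : ℂ) =
      (Real.Gamma (k₁ + k₂ + m₂ - m₁) : ℂ) := by
    rw [← Complex.Gamma_ofReal, show k₁ + k₂ - m₁ + m₂ = d + 2 * m₂ + 1 by omega, ← hdR]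
    congr 1; push_cast; ring
  have g3 : Complex.Gamma ((k₁ + k₂ + m₁ - m₂ : ℕ) : ℂ) =
      (Real.Gamma (k₁ + k₂ + -(m₂ : ℝ) + m₁) : ℂ) := by
    rw [← Complex.Gamma_ofReal, show k₁ + k₂ + m₁ - m₂ = d + 2 * m₁ + 1 by omega, ← hdR]
    congr 1; push_cast; ring
  have g4 : Complex.Gamma ((d : ℂ) + 1) = (Real.Gamma (k₁ + k₂ + -(m₂ : ℝ) - m₁) : ℂ) := by
    rw [← Complex.Gamma_ofReal, ← hdR]; congr 1; push_cast; ring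
  -- The limit in `tp` and the zeta value in `tm` are those of the right-hand side, so the two
  -- summands match crosswise: `+m₂` gives the limit term and `-m₂` gives `ζ(r₂)Γ(r₂)`.
  rw [hI, hhalf, g1, g2, g3, g4]
  rw [n1] at tp
  rw [n2] at tm
  simp only [Complex.ofReal_mul, Complex.ofReal_pow, Complex.ofReal_ofNat,
    Complex.ofReal_intCast] at tp tm ⊢
  linear_combination ((-1 : ℂ) ^ k₂ / ((2 * (k₁ + k₂) - 2).factorial : ℂ) *
    (sigmaZ (2 * m₁) n : ℂ)) * (tp + tm)

end
end
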